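/- arXiv:1205.7018 — 2 statements merged into one kernel-verified Lean document; each statement's English description precedes it below -/
import Mathlib

section
/- Let 0 < ε < ε₀ and f ∈ 𝔚_{ε₀}. (1) If f'''(t) < 0 for almost every t ∈ ℝ, then for every x = (x₁,x₂) ∈ Ω_ε, B_ε(x; f) = m_R(u)·(x₁ − u) + f(u), where u = x₁ + ε − √(ε² − (x₂ − x₁²)) and m_R(u) = ε⁻¹e^{−u/ε}∫_{−∞}^u f'(t)e^{t/ε}dt. (2) If f'''(t) > 0 for almost every t ∈ ℝ, then for every x = (x₁,x₂) ∈ Ω_ε, B_ε(x; f) = m_L(u)·(x₁ − u) + f(u), where u = x₁ − ε + √(ε² − (x₂ − x₁²)) and m_L(u) = ε⁻¹e^{u/ε}∫_u^{+∞} f'(t)e^{−t/ε}dt. -/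
open MeasureTheory Set Real

/-- The average of `φ` over the interval with endpoints `a`, `b`. -/
noncomputable def intAvg (φ : ℝ → ℝ) (a b : ℝ) : ℝ := (∫ t in a..b, φ t) / (b - a)

/-- `φ` belongs to the ball of radius `ε` of (quadratic-norm) BMO on the interval `(l, r)`. -/
def memBMOe (ε l r : ℝ) (φ : ℝ → ℝ) : Prop :=
  IntegrableOn φ (Ioo l r) ∧
  IntegrableOn (fun t => (φ t) ^ 2) (Ioo l r) ∧
  ∀ c d : ℝ, l ≤ c → c < d → d ≤ r →
    intAvg (fun t => (φ t) ^ 2) c d - (intAvg φ c d) ^ 2 ≤ ε ^ 2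

/-- The Bellman function, computed with the interval `I = (0,1)`. -/
noncomputable def bellmanFn (ε : ℝ) (f : ℝ → ℝ) (x₁ x₂ : ℝ) : ℝ :=
  sSup {y | ∃ φ : ℝ → ℝ, memBMOe ε 0 1 φ ∧
    IntegrableOn (fun t => f (φ t)) (Ioo 0 1) ∧
    intAvg φ 0 1 = x₁ ∧ intAvg (fun t => (φ t) ^ 2) 0 1 = x₂ ∧
    y = intAvg (fun t => f (φ t)) 0 1}

/-- The parabolic strip `Ω_ε`. -/
def parabStrip (ε : ℝ) : Set (ℝ × ℝ) := {x | x.1 ^ 2 ≤ x.2 ∧ x.2 ≤ x.1 ^ 2 + ε ^ 2}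

/-- The parameter of the right tangent through `x`. -/
noncomputable def uRpt (ε : ℝ) (x : ℝ × ℝ) : ℝ :=
  x.1 + ε - Real.sqrt (ε ^ 2 - (x.2 - x.1 ^ 2))

/-- The class `𝔚_{ε₀}`. -/
def memWcl (ε₀ : ℝ) (f f3 : ℝ → ℝ) : Prop :=
  ContDiff ℝ 2 f ∧
  (∀ x y : ℝ, x ≤ y → deriv (deriv f) y - deriv (deriv f) x = ∫ t in x..y, f3 t) ∧
  Integrable (fun t => f t * Real.exp (-|t| / ε₀)) ∧
  Integrable (fun t => deriv f t * Real.exp (-|t| / ε₀)) ∧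
  Integrable (fun t => deriv (deriv f) t * Real.exp (-|t| / ε₀)) ∧
  Integrable (fun t => f3 t * Real.exp (-|t| / ε₀))

/-- The parameter of the left tangent through `x`. -/
noncomputable def uLpt (ε : ℝ) (x : ℝ × ℝ) : ℝ :=
  x.1 - ε + Real.sqrt (ε ^ 2 - (x.2 - x.1 ^ 2))

/-!
The candidate is a minimum of affine functions, one for each tangent to the upper boundary of the
strip, so it is concave along those segments of Bellman points to which a common tangent applies.
Every interval can be cut, in a ratio bounded away from `0` and `1`, along such a segment, as long
as `φ` is bounded and its BMO norm is strictly below `ε`. Iterating the cuts, Lebesgue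
differentiation brings the averages down to the lower boundary, where the candidate is `f`; this
gives the upper bound. Truncating and slightly contracting a general `φ` reduces it to that case,
the passage to the limit being dominated because `f` is monotone near `±∞`. The bound is attained by
a truncated logarithm, along which averages become exponential means. The reflection `t ↦ -t`
exchanges the two cases.
-/

open Filter Topology

section Averages

variable {g : ℝ → ℝ} {l r c d e : ℝ}

lemma intervalIntegrable_of_integrableOn_Ioo (hg : IntegrableOn g (Ioo l r)) (hlc : l ≤ c)
    (hcd : c ≤ d) (hdr : d ≤ r) : IntervalIntegrable g volume c d := by
  rw [intervalIntegrable_iff_integrableOn_Ioo_of_le hcd]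
  exact hg.mono_set (Ioo_subset_Ioo hlc hdr)

lemma sub_mul_intAvg (hcd : c ≠ d) : (d - c) * intAvg g c d = ∫ t in c..d, g t :=
  mul_div_cancel₀ _ (sub_ne_zero.2 hcd.symm)

lemma intAvg_eq_iff {a : ℝ} (hcd : c ≠ d) :
    intAvg g c d = a ↔ ∫ t in c..d, g t = (d - c) * a := by
  rw [intAvg, div_eq_iff (sub_ne_zero.2 hcd.symm), mul_comm]

lemma intAvg_zero_one (g : ℝ → ℝ) : intAvg g 0 1 = ∫ t in (0 : ℝ)..1, g t := by
  rw [intAvg, sub_zero, div_one]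

lemma intAvg_neg (g : ℝ → ℝ) (c d : ℝ) : intAvg (fun t => -g t) c d = -intAvg g c d := by
  rw [intAvg, intAvg, intervalIntegral.integral_neg, neg_div]

lemma intAvg_const (a : ℝ) (hcd : c ≠ d) : intAvg (fun _ => a) c d = a := by
  rw [intAvg_eq_iff hcd, intervalIntegral.integral_const, smul_eq_mul]

lemma intAvg_split (hg : IntegrableOn g (Ioo l r)) (hlc : l ≤ c) (hce : c < e) (hed : e < d)
    (hdr : d ≤ r) : (d - c) * intAvg g c d = (e - c) * intAvg g c e + (d - e) * intAvg g e d := by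
  rw [sub_mul_intAvg (hce.trans hed).ne, sub_mul_intAvg hce.ne, sub_mul_intAvg hed.ne,
    intervalIntegral.integral_add_adjacent_intervals]
  · exact intervalIntegrable_of_integrableOn_Ioo hg hlc hce.le (hed.le.trans hdr)
  · exact intervalIntegrable_of_integrableOn_Ioo hg (hlc.trans hce.le) hed.le hdr

lemma abs_intAvg_le {M : ℝ} (hg : ∀ t, |g t| ≤ M) (hcd : c < d) : |intAvg g c d| ≤ M := by
  have hlength : 0 < d - c := sub_pos.2 hcd
  have hintegral := intervalIntegral.norm_integral_le_of_norm_le_const (a := c) (b := d)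
    fun t _ => (Real.norm_eq_abs (g t)).trans_le (hg t)
  rwa [intAvg, abs_div, div_le_iff₀ (abs_pos.2 hlength.ne')]

lemma continuousOn_intAvg_right (hg : IntegrableOn g (Ioo l r)) (hlc : l ≤ c) (hce : c < e)
    (hdr : d ≤ r) : ContinuousOn (fun s => intAvg g c s) (Icc e d) := by
  rcases lt_or_ge d e with hde | hed
  · simp only [Icc_eq_empty hde.not_ge, continuousOn_empty]
  have hcd := hce.le.trans hed
  have hint := intervalIntegrable_of_integrableOn_Ioo hg hlc hcd hdr
  have hprimitive := intervalIntegral.continuousOn_primitive_interval' hint left_mem_uIcc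
  rw [uIcc_of_le hcd] at hprimitive
  refine (hprimitive.mono (Icc_subset_Icc_left hce.le)).div (by fun_prop) fun s hs => ?_
  exact (sub_pos.2 (hce.trans_le hs.1)).ne'

lemma continuousOn_intAvg_left (hg : IntegrableOn g (Ioo l r)) (hlc : l ≤ c) (hed : e < d)
    (hdr : d ≤ r) : ContinuousOn (fun s => intAvg g s d) (Icc c e) := by
  rcases lt_or_ge e c with hec | hce
  · simp only [Icc_eq_empty hec.not_ge, continuousOn_empty]
  have hcd := hce.trans hed.le
  have hint := intervalIntegrable_of_integrableOn_Ioo hg hlc hcd hdr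
  have hprimitive := (intervalIntegral.continuousOn_primitive_interval' hint right_mem_uIcc).neg
  rw [uIcc_of_le hcd] at hprimitive
  refine ((hprimitive.mono (Icc_subset_Icc_right hed.le)).congr fun s _ => ?_).div
    (by fun_prop) fun s hs => (sub_pos.2 (hs.2.trans_lt hed)).ne'
  exact intervalIntegral.integral_symm _ _

/-- Closed intervals `[p.1, p.2]` of positive length that contain `t` and shrink to `t`. -/
def intervalsAt (t : ℝ) : Filter (ℝ × ℝ) :=
  𝓝[{p | p.1 < p.2 ∧ p.1 ≤ t ∧ t ≤ p.2}] (t, t)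

lemma eventually_mem_intervalsAt (t : ℝ) :
    ∀ᶠ p in intervalsAt t, p.1 < p.2 ∧ p.1 ≤ t ∧ t ≤ p.2 :=
  eventually_mem_nhdsWithin

lemma eventually_Icc_subset_intervalsAt {t : ℝ} {s : Set ℝ} (hs : s ∈ 𝓝 t) :
    ∀ᶠ p in intervalsAt t, Icc p.1 p.2 ⊆ s := by
  obtain ⟨δ, hδ, hball⟩ := Metric.mem_nhds_iff.1 hs
  have hfst : ∀ᶠ p in intervalsAt t, p.1 ∈ Metric.ball t δ :=
    mem_nhdsWithin_of_mem_nhds (continuousAt_fst.preimage_mem_nhds (Metric.ball_mem_nhds t hδ))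
  have hsnd : ∀ᶠ p in intervalsAt t, p.2 ∈ Metric.ball t δ :=
    mem_nhdsWithin_of_mem_nhds (continuousAt_snd.preimage_mem_nhds (Metric.ball_mem_nhds t hδ))
  filter_upwards [hfst, hsnd] with p h1 h2
  rw [Real.ball_eq_Ioo] at h1 h2 hball
  exact (Icc_subset_Ioo h1.1 h2.2).trans hball

lemma ae_tendsto_intAvg (hg : LocallyIntegrable g) :
    ∀ᵐ t, Tendsto (fun p : ℝ × ℝ => intAvg g p.1 p.2) (intervalsAt t) (𝓝 (g t)) := by
  filter_upwards [IsUnifLocDoublingMeasure.ae_tendsto_average volume hg 1] with t ht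
  have hradius : Tendsto (fun p : ℝ × ℝ => (p.2 - p.1) / 2) (intervalsAt t) (𝓝[>] 0) := by
    refine tendsto_nhdsWithin_iff.2 ⟨?_, ?_⟩
    · have hcont : Continuous fun p : ℝ × ℝ => (p.2 - p.1) / 2 := by fun_prop
      exact (hcont.tendsto' (t, t) 0 (by simp)).mono_left nhdsWithin_le_nhds
    · filter_upwards [eventually_mem_intervalsAt t] with p hp
      exact half_pos (sub_pos.2 hp.1)
  have hmem : ∀ᶠ p in intervalsAt t, t ∈ Metric.closedBall ((p.1 + p.2) / 2)
      (1 * ((p.2 - p.1) / 2)) := by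
    filter_upwards [eventually_mem_intervalsAt t] with p ⟨_, hleft, hright⟩
    rw [Metric.mem_closedBall, Real.dist_eq, abs_le]
    constructor <;> linarith
  refine (ht _ _ hradius hmem).congr' ?_
  filter_upwards [eventually_mem_intervalsAt t] with p hp
  have hball : Metric.closedBall ((p.1 + p.2) / 2) ((p.2 - p.1) / 2) = Icc p.1 p.2 := by
    rw [Real.closedBall_eq_Icc]
    congr 1 <;> ring
  rw [hball, setAverage_congr Ioc_ae_eq_Icc.symm, ← uIoc_of_le hp.1.le, interval_average_eq,
    smul_eq_mul, intAvg, div_eq_inv_mul]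

lemma ae_tendsto_intAvg_of_integrableOn (hg : IntegrableOn g (Ioo l r)) :
    ∀ᵐ t ∂volume.restrict (Ioo l r),
      Tendsto (fun p : ℝ × ℝ => intAvg g p.1 p.2) (intervalsAt t) (𝓝 (g t)) := by
  have hlocal := (hg.integrable_indicator measurableSet_Ioo).locallyIntegrable
  rw [ae_restrict_iff' measurableSet_Ioo]
  filter_upwards [ae_tendsto_intAvg hlocal] with t ht htlr
  rw [indicator_of_mem htlr] at ht
  refine ht.congr' ?_
  filter_upwards [eventually_mem_intervalsAt t,
    eventually_Icc_subset_intervalsAt (Ioo_mem_nhds htlr.1 htlr.2)] with p hp hsub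
  rw [intAvg, intAvg, intervalIntegral.integral_congr fun s hs => ?_]
  rw [uIcc_of_le hp.1.le] at hs
  exact indicator_of_mem (hsub hs) g

lemma tendsto_intAvg_of_dominated {F : ℕ → ℝ → ℝ} {bound : ℝ → ℝ} (hlr : l ≤ r)
    (hF : ∀ n, AEStronglyMeasurable (F n) (volume.restrict (Ioo l r)))
    (hbound : IntegrableOn bound (Ioo l r)) (hle : ∀ n t, |F n t| ≤ bound t)
    (hlim : ∀ t, Tendsto (fun n => F n t) atTop (𝓝 (g t))) :
    Tendsto (fun n => intAvg (F n) l r) atTop (𝓝 (intAvg g l r)) := by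
  refine Tendsto.div_const ?_ _
  have hIoc : volume.restrict (uIoc l r) = volume.restrict (Ioo l r) := by
    rw [uIoc_of_le hlr, Measure.restrict_congr_set Ioo_ae_eq_Ioc]
  refine intervalIntegral.tendsto_integral_filter_of_dominated_convergence bound
    (.of_forall fun n => by rw [hIoc]; exact hF n)
    (.of_forall fun n => .of_forall fun t _ => hle n t) ?_ (.of_forall fun t _ => hlim t)
  exact intervalIntegrable_of_integrableOn_Ioo hbound le_rfl hlr le_rfl

end Averages

section LocalToGlobal

variable {E : ℝ → ℝ → ℝ} {θ l r : ℝ}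

/-- Every subinterval `[c, d]` of `[l, r]` has a splitting point `e`, with both parts at least a
proportion `θ` of the whole, across which the interval functional `E` is subadditive. -/
def SplitsAtRatio (θ l r : ℝ) (E : ℝ → ℝ → ℝ) : Prop :=
  ∀ c d, l ≤ c → c < d → d ≤ r →
    ∃ e, θ * (d - c) ≤ e - c ∧ θ * (d - c) ≤ d - e ∧ E c d ≤ E c e + E e d

lemma exists_tendsto_intervalsAt {a b : ℕ → ℝ} (ha : Monotone a) (hb : Antitone b)
    (hab : ∀ n, a n < b n) (hlength : Tendsto (fun n => b n - a n) atTop (𝓝 0)) :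
    ∃ t, (∀ n, t ∈ Icc (a n) (b n)) ∧ Tendsto (fun n => (a n, b n)) atTop (intervalsAt t) := by
  have hmem := mem_iInter.1 (ha.ciSup_mem_iInter_Icc_of_antitone hb fun n => (hab n).le)
  set t := ⨆ n, a n
  refine ⟨t, hmem, tendsto_nhdsWithin_iff.2 ⟨Tendsto.prodMk_nhds ?_ ?_, ?_⟩⟩
  · refine tendsto_order.2 ⟨fun x hx => ?_, fun x hx => .of_forall fun n => (hmem n).1.trans_lt hx⟩
    filter_upwards [hlength.eventually_lt_const (sub_pos.2 hx)] with n hn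
    linarith [(hmem n).2]
  · refine tendsto_order.2 ⟨fun x hx => .of_forall fun n => hx.trans_le (hmem n).2, fun x hx => ?_⟩
    filter_upwards [hlength.eventually_lt_const (sub_pos.2 hx)] with n hn
    linarith [(hmem n).1]
  · exact .of_forall fun n => ⟨hab n, hmem n⟩

namespace SplitsAtRatio

lemma exists_pos_subinterval (hE : SplitsAtRatio θ l r E) (hθ : 0 < θ) {c d : ℝ} (hlc : l ≤ c)
    (hcd : c < d) (hdr : d ≤ r) (hpos : 0 < E c d) :
    ∃ c' d', c ≤ c' ∧ c' < d' ∧ d' ≤ d ∧ d' - c' ≤ (1 - θ) * (d - c) ∧ 0 < E c' d' := by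
  obtain ⟨e, hce, hed, hsub⟩ := hE c d hlc hcd hdr
  have hproportion : 0 < θ * (d - c) := mul_pos hθ (sub_pos.2 hcd)
  rcases lt_or_ge 0 (E c e) with hleft | hleft
  · exact ⟨c, e, le_rfl, by linarith, by linarith, by linarith, hleft⟩
  · exact ⟨e, d, by linarith, by linarith, le_rfl, by linarith, by linarith⟩

lemma exists_pos_sequence (hE : SplitsAtRatio θ l r E) (hθ : 0 < θ) (hlr : l < r)
    (hpos : 0 < E l r) :
    ∃ a b : ℕ → ℝ, Monotone a ∧ Antitone b ∧ (∀ n, l ≤ a n ∧ a n < b n ∧ 0 < E (a n) (b n)) ∧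
      (∀ n, b n ≤ r) ∧ ∀ n, b (n + 1) - a (n + 1) ≤ (1 - θ) * (b n - a n) := by
  let PosInterval := {p : ℝ × ℝ // (l ≤ p.1 ∧ p.1 < p.2 ∧ 0 < E p.1 p.2) ∧ p.2 ≤ r}
  have hstep : ∀ p : PosInterval, ∃ q : PosInterval, p.1.1 ≤ q.1.1 ∧ q.1.2 ≤ p.1.2 ∧
      q.1.2 - q.1.1 ≤ (1 - θ) * (p.1.2 - p.1.1) := by
    rintro ⟨⟨c, d⟩, ⟨hlc, hcd, hEcd⟩, hdr⟩
    obtain ⟨c', d', hcc', hcd', hdd', hshrink, hE'⟩ :=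
      hE.exists_pos_subinterval hθ hlc hcd hdr hEcd
    exact ⟨⟨(c', d'), ⟨hlc.trans hcc', hcd', hE'⟩, hdd'.trans hdr⟩, hcc', hdd', hshrink⟩
  choose next hleft hright hshrink using hstep
  let s : ℕ → PosInterval := fun n => next^[n] ⟨(l, r), ⟨le_rfl, hlr, hpos⟩, le_rfl⟩
  have hs : ∀ n, s (n + 1) = next (s n) := fun n => Function.iterate_succ_apply' _ _ _
  refine ⟨fun n => (s n).1.1, fun n => (s n).1.2, monotone_nat_of_le_succ fun n => ?_,
    antitone_nat_of_succ_le fun n => ?_, fun n => (s n).2.1, fun n => (s n).2.2, fun n => ?_⟩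
  · rw [hs]; exact hleft _
  · rw [hs]; exact hright _
  · simp only [hs]; exact hshrink _

lemma nonpos (hE : SplitsAtRatio θ l r E) (hθ : 0 < θ) (hlr : l < r)
    (hlocal : ∀ t ∈ Icc l r, ∀ᶠ p in intervalsAt t, E p.1 p.2 ≤ 0) : E l r ≤ 0 := by
  by_contra! hpos
  obtain ⟨a, b, ha, hb, hab, hbr, hshrink⟩ := hE.exists_pos_sequence hθ hlr hpos
  have hθ1 : 0 ≤ 1 - θ := by
    have := (sub_pos.2 (hab 1).2.1).trans_le (hshrink 0)
    exact (pos_of_mul_pos_left this (sub_pos.2 (hab 0).2.1).le).le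
  have hgeometric : ∀ n, b n - a n ≤ (1 - θ) ^ n * (b 0 - a 0) := fun n => by
    induction n with
    | zero => rw [pow_zero, one_mul]
    | succ n ih =>
      rw [pow_succ', mul_assoc]
      exact (hshrink n).trans (mul_le_mul_of_nonneg_left ih hθ1)
  have hlength : Tendsto (fun n => b n - a n) atTop (𝓝 0) := by
    refine squeeze_zero (fun n => (sub_pos.2 (hab n).2.1).le) hgeometric ?_
    simpa only [zero_mul] using
      (tendsto_pow_atTop_nhds_zero_of_lt_one hθ1 (by linarith)).mul_const (b 0 - a 0)
  obtain ⟨t, ht, hlim⟩ := exists_tendsto_intervalsAt ha hb (fun n => (hab n).2.1) hlength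
  have htlr : t ∈ Icc l r := ⟨(hab 0).1.trans (ht 0).1, (ht 0).2.trans (hbr 0)⟩
  obtain ⟨n, hn⟩ := (hlim.eventually (hlocal t htlr)).exists
  exact hn.not_gt (hab n).2.2

lemma le_add_measure_of_isOpen (hE : SplitsAtRatio θ l r E) (hθ : 0 < θ) (hlr : l < r) {K η : ℝ}
    (hK : 0 ≤ K) (hη : 0 ≤ η) (hcrude : ∀ c d, c < d → E c d ≤ K * (d - c)) {U : Set ℝ}
    (hU : IsOpen U) (hUfinite : volume U ≠ ⊤)
    (hlocal : ∀ t ∈ Icc l r, t ∉ U → ∀ᶠ p in intervalsAt t, E p.1 p.2 ≤ η * (p.2 - p.1)) :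
    E l r ≤ η * (r - l) + K * volume.real U := by
  have hint : Integrable (U.indicator (1 : ℝ → ℝ)) :=
    (integrable_indicator_iff hU.measurableSet).2 (integrableOn_const hUfinite)
  have hnonneg : ∀ t, 0 ≤ U.indicator (1 : ℝ → ℝ) t := indicator_nonneg fun _ _ => zero_le_one
  have hUlr : ∫ t in l..r, U.indicator (1 : ℝ → ℝ) t ≤ volume.real U := by
    rw [intervalIntegral.integral_of_le hlr.le, ← integral_indicator_one hU.measurableSet]
    exact setIntegral_le_integral hint (.of_forall hnonneg)
  suffices hcorrected :
      E l r - η * (r - l) - K * ∫ t in l..r, U.indicator (1 : ℝ → ℝ) t ≤ 0 by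
    linarith [mul_le_mul_of_nonneg_left hUlr hK]
  refine nonpos (E := fun c d => E c d - η * (d - c) - K * ∫ t in c..d, U.indicator 1 t)
    (fun c d hlc hcd hdr => ?_) hθ hlr fun t ht => ?_
  · obtain ⟨e, hce, hed, hsub⟩ := hE c d hlc hcd hdr
    refine ⟨e, hce, hed, ?_⟩
    have hadd := intervalIntegral.integral_add_adjacent_intervals
      (hint.intervalIntegrable (a := c) (b := e)) (hint.intervalIntegrable (b := d))
    linear_combination hsub + K * hadd
  · by_cases htU : t ∈ U
    · filter_upwards [eventually_mem_intervalsAt t,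
        eventually_Icc_subset_intervalsAt (hU.mem_nhds htU)] with p hp hsub
      have hfull : ∫ t in p.1..p.2, U.indicator (1 : ℝ → ℝ) t = p.2 - p.1 := by
        rw [← integral_one]
        refine intervalIntegral.integral_congr fun s hs => ?_
        rw [uIcc_of_le hp.1.le] at hs
        exact indicator_of_mem (hsub hs) 1
      rw [hfull]
      linarith [hcrude _ _ hp.1, mul_nonneg hη (sub_pos.2 hp.1).le]
    · filter_upwards [eventually_mem_intervalsAt t, hlocal t ht htU] with p hp hgood
      have hmeasure : 0 ≤ ∫ t in p.1..p.2, U.indicator (1 : ℝ → ℝ) t :=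
        intervalIntegral.integral_nonneg hp.1.le fun s _ => hnonneg s
      linarith [mul_nonneg hK hmeasure]

lemma nonpos_of_ae (hE : SplitsAtRatio θ l r E) (hθ : 0 < θ) (hlr : l < r) {K : ℝ} (hK : 0 ≤ K)
    (hcrude : ∀ c d, c < d → E c d ≤ K * (d - c))
    (hlocal : ∀ᵐ t ∂volume.restrict (Ioo l r),
      ∀ η > 0, ∀ᶠ p in intervalsAt t, E p.1 p.2 ≤ η * (p.2 - p.1)) : E l r ≤ 0 := by
  suffices hsmall : ∀ η > 0, E l r ≤ η * (r - l + K) by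
    have hlim : Tendsto (fun η : ℝ => η * (r - l + K)) (𝓝[>] 0) (𝓝 0) :=
      ((continuous_mul_const _).tendsto' 0 0 (zero_mul _)).mono_left nhdsWithin_le_nhds
    exact ge_of_tendsto hlim (eventually_mem_nhdsWithin.mono fun η => hsmall η)
  intro η hη
  rw [Measure.restrict_congr_set Ioo_ae_eq_Icc, ae_restrict_iff' measurableSet_Icc] at hlocal
  -- The exceptional null set is covered by an open set so small that the crude bound suffices.
  obtain ⟨U, hbad, hUopen, hUη⟩ := Set.exists_isOpen_lt_of_lt (μ := volume) _ (ENNReal.ofReal η)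
    ((ae_iff.1 hlocal).trans_lt (ENNReal.ofReal_pos.2 hη))
  have hle := hE.le_add_measure_of_isOpen hθ hlr hK hη.le hcrude hUopen
    (hUη.trans ENNReal.ofReal_lt_top).ne
    fun t ht htU => not_not.1 (fun h => htU (hbad h)) ht η hη
  have hUreal : volume.real U ≤ η := ENNReal.toReal_le_of_le_ofReal hη.le hUη.le
  linarith [mul_le_mul_of_nonneg_left hUreal hK]

end SplitsAtRatio

lemma integrableOn_Ioo_of_abs_le {g : ℝ → ℝ} {M : ℝ}
    (hm : AEStronglyMeasurable g (volume.restrict (Ioo l r))) (hM : ∀ t, |g t| ≤ M) :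
    IntegrableOn g (Ioo l r) :=
  Integrable.of_bound hm M (.of_forall hM)

/-- The point of the plane whose coordinates are the averages of `φ` and `φ²` over `[c, d]`. -/
noncomputable def bellmanPoint (φ : ℝ → ℝ) (c d : ℝ) : ℝ × ℝ :=
  (intAvg φ c d, intAvg (fun t => φ t ^ 2) c d)

lemma abs_sq_le_sq {x M : ℝ} (hx : |x| ≤ M) : |x ^ 2| ≤ M ^ 2 := by
  rw [abs_pow]
  exact pow_le_pow_left₀ (abs_nonneg x) hx 2

lemma bellmanPoint_mem_of_abs_le {ψ : ℝ → ℝ} {M c d : ℝ} (hM : ∀ t, |ψ t| ≤ M) (hcd : c < d) :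
    bellmanPoint ψ c d ∈ Icc (-M) M ×ˢ Icc (-M ^ 2) (M ^ 2) :=
  ⟨abs_le.1 (abs_intAvg_le hM hcd),
    abs_le.1 (abs_intAvg_le (fun t => abs_sq_le_sq (hM t)) hcd)⟩

lemma ae_tendsto_bellmanPoint {φ : ℝ → ℝ} (hφ : IntegrableOn φ (Ioo l r))
    (hφ2 : IntegrableOn (fun t => φ t ^ 2) (Ioo l r)) :
    ∀ᵐ t ∂volume.restrict (Ioo l r),
      Tendsto (fun p : ℝ × ℝ => bellmanPoint φ p.1 p.2) (intervalsAt t) (𝓝 (φ t, φ t ^ 2)) := by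
  filter_upwards [ae_tendsto_intAvg_of_integrableOn hφ, ae_tendsto_intAvg_of_integrableOn hφ2]
    with t hlim hlim2 using hlim.prodMk_nhds hlim2

/-- Bellman induction: a function on the plane that is concave along the splittings of `ψ` dominates
the average of its values on the parabola. -/
lemma intAvg_le_of_splitsAtRatio {B : ℝ × ℝ → ℝ} {ψ : ℝ → ℝ} {M : ℝ} (hB : Continuous B)
    (hm : AEStronglyMeasurable ψ (volume.restrict (Ioo l r))) (hM : ∀ t, |ψ t| ≤ M)
    (hθ : 0 < θ) (hlr : l < r)
    (hsplit : SplitsAtRatio θ l r fun c d => -((d - c) * B (bellmanPoint ψ c d))) :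
    intAvg (fun t => B (ψ t, ψ t ^ 2)) l r ≤ B (bellmanPoint ψ l r) := by
  set F : ℝ → ℝ := fun t => B (ψ t, ψ t ^ 2)
  have hFm : AEStronglyMeasurable F (volume.restrict (Ioo l r)) :=
    hB.comp_aestronglyMeasurable (hm.prodMk (hm.pow 2))
  obtain ⟨K, hK⟩ := (isCompact_Icc.prod isCompact_Icc).exists_bound_of_continuousOn
    (hB.continuousOn (s := Icc (-M) M ×ˢ Icc (-M ^ 2) (M ^ 2)))
  have hFK : ∀ t, |F t| ≤ K := fun t => hK _ ⟨abs_le.1 (hM t), abs_le.1 (abs_sq_le_sq (hM t))⟩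
  have hFint := integrableOn_Ioo_of_abs_le hFm hFK
  let E : ℝ → ℝ → ℝ := fun c d => (d - c) * (intAvg F c d - B (bellmanPoint ψ c d))
  have hE : SplitsAtRatio θ l r E := fun c d hlc hcd hdr => by
    obtain ⟨e, hce, hed, hsub⟩ := hsplit c d hlc hcd hdr
    have hproportion : 0 < θ * (d - c) := mul_pos hθ (sub_pos.2 hcd)
    refine ⟨e, hce, hed, ?_⟩
    linear_combination hsub + intAvg_split hFint hlc (by linarith) (by linarith : e < d) hdr
  have hcrude : ∀ c d, c < d → E c d ≤ (K + K) * (d - c) := fun c d hcd => by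
    rw [mul_comm (K + K)]
    refine mul_le_mul_of_nonneg_left ?_ (sub_pos.2 hcd).le
    have hBK := hK _ (bellmanPoint_mem_of_abs_le hM hcd)
    linarith [(abs_le.1 (abs_intAvg_le hFK hcd)).2, (abs_le.1 hBK).1]
  have hK0 : 0 ≤ K := (abs_nonneg _).trans (hFK 0)
  suffices E l r ≤ 0 from sub_nonpos.1 (nonpos_of_mul_nonpos_right this (sub_pos.2 hlr))
  refine hE.nonpos_of_ae hθ hlr (add_nonneg hK0 hK0) hcrude ?_
  filter_upwards [ae_tendsto_intAvg_of_integrableOn hFint,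
    ae_tendsto_bellmanPoint (integrableOn_Ioo_of_abs_le hm hM)
      (integrableOn_Ioo_of_abs_le (hm.pow 2) fun t => abs_sq_le_sq (hM t))] with t hF hpoint η hη
  have hlim := hF.sub ((hB.tendsto _).comp hpoint)
  rw [sub_self] at hlim
  filter_upwards [eventually_mem_intervalsAt t, hlim.eventually_lt_const hη] with p hp hpη
  rw [mul_comm η]
  exact mul_le_mul_of_nonneg_left hpη.le (sub_pos.2 hp.1).le

end LocalToGlobal

section BMO

open scoped NNReal

variable {φ g : ℝ → ℝ} {ε l r c d : ℝ} {K : ℝ≥0}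

lemma intervalIntegrable_sub_const_sq (hφ : IntervalIntegrable φ volume c d)
    (hφ2 : IntervalIntegrable (fun t => φ t ^ 2) volume c d) (s : ℝ) :
    IntervalIntegrable (fun t => (φ t - s) ^ 2) volume c d := by
  refine ((hφ2.sub (hφ.const_mul (2 * s))).add (intervalIntegrable_const (c := s ^ 2))).congr
    fun t _ => ?_
  ring

lemma integral_sub_const_sq (hcd : c ≠ d) (hφ : IntervalIntegrable φ volume c d)
    (hφ2 : IntervalIntegrable (fun t => φ t ^ 2) volume c d) (s : ℝ) :
    ∫ t in c..d, (φ t - s) ^ 2 =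
      (d - c) * (intAvg (fun t => φ t ^ 2) c d - intAvg φ c d ^ 2 + (intAvg φ c d - s) ^ 2) := by
  have hexpand : ∀ t, (φ t - s) ^ 2 = φ t ^ 2 - 2 * s * φ t + s ^ 2 := fun t => by ring
  simp only [hexpand]
  rw [intervalIntegral.integral_add (hφ2.sub (hφ.const_mul _)) intervalIntegrable_const,
    intervalIntegral.integral_sub hφ2 (hφ.const_mul _), intervalIntegral.integral_const_mul,
    intervalIntegral.integral_const, smul_eq_mul, ← sub_mul_intAvg hcd, ← sub_mul_intAvg hcd]
  ring

/-- The variance of `φ` is the least average of `(φ - s)²`, attained when `s` is the average. -/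
lemma variance_comp_lipschitz_le (hg : LipschitzWith K g) (hcd : c < d)
    (hφ : IntervalIntegrable φ volume c d)
    (hφ2 : IntervalIntegrable (fun t => φ t ^ 2) volume c d)
    (hgφ : IntervalIntegrable (fun t => g (φ t)) volume c d)
    (hgφ2 : IntervalIntegrable (fun t => g (φ t) ^ 2) volume c d) :
    intAvg (fun t => g (φ t) ^ 2) c d - intAvg (fun t => g (φ t)) c d ^ 2 ≤
      K ^ 2 * (intAvg (fun t => φ t ^ 2) c d - intAvg φ c d ^ 2) := by
  set a := intAvg φ c d with ha
  have hpointwise : ∀ t, (g (φ t) - g a) ^ 2 ≤ K ^ 2 * (φ t - a) ^ 2 := fun t => by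
    rw [← mul_pow, sq_le_sq, abs_mul, NNReal.abs_eq]
    exact hg.dist_le_mul (φ t) a
  have hint := intervalIntegral.integral_mono hcd.le
    (intervalIntegrable_sub_const_sq hgφ hgφ2 (g a))
    ((intervalIntegrable_sub_const_sq hφ hφ2 a).const_mul _) hpointwise
  rw [intervalIntegral.integral_const_mul, integral_sub_const_sq hcd.ne hgφ hgφ2,
    integral_sub_const_sq hcd.ne hφ hφ2, mul_left_comm, ← ha, sub_self] at hint
  have hle := le_of_mul_le_mul_left hint (sub_pos.2 hcd)
  nlinarith [sq_nonneg (intAvg (fun t => g (φ t)) c d - g a)]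

lemma memBMOe.memLp_two (hφ : memBMOe ε l r φ) : MemLp φ 2 (volume.restrict (Ioo l r)) :=
  (memLp_two_iff_integrable_sq hφ.1.aestronglyMeasurable).2 hφ.2.1

lemma memBMOe.comp_lipschitz (hφ : memBMOe ε l r φ) (hg : LipschitzWith K g) :
    memBMOe (K * ε) l r (fun t => g (φ t)) := by
  have hLp : MemLp (fun t => g (φ t)) 2 (volume.restrict (Ioo l r)) := by
    have hcentred : LipschitzWith K fun x => g x - g 0 := by
      simpa only [add_zero] using hg.sub (LipschitzWith.const (g 0))
    have hcomp := hcentred.comp_memLp (sub_self _) hφ.memLp_two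
    simpa only [Function.comp_def, Pi.add_def, sub_add_cancel] using hcomp.add (memLp_const (g 0))
  have hint : IntegrableOn (fun t => g (φ t)) (Ioo l r) := hLp.integrable one_le_two
  have hint2 : IntegrableOn (fun t => g (φ t) ^ 2) (Ioo l r) := hLp.integrable_sq
  refine ⟨hint, hint2, fun c d hlc hcd hdr => ?_⟩
  refine (variance_comp_lipschitz_le hg hcd
    (intervalIntegrable_of_integrableOn_Ioo hφ.1 hlc hcd.le hdr)
    (intervalIntegrable_of_integrableOn_Ioo hφ.2.1 hlc hcd.le hdr)
    (intervalIntegrable_of_integrableOn_Ioo hint hlc hcd.le hdr)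
    (intervalIntegrable_of_integrableOn_Ioo hint2 hlc hcd.le hdr)).trans ?_
  rw [mul_pow]
  exact mul_le_mul_of_nonneg_left (hφ.2.2 c d hlc hcd hdr) (sq_nonneg _)

lemma memBMOe.neg (hφ : memBMOe ε l r φ) : memBMOe ε l r (fun t => -φ t) := by
  simpa only [NNReal.coe_one, one_mul, Pi.neg_apply, id] using
    hφ.comp_lipschitz LipschitzWith.id.neg

lemma memBMOe_const (a : ℝ) : memBMOe ε l r (fun _ => a) := by
  refine ⟨integrableOn_const measure_Ioo_lt_top.ne, integrableOn_const measure_Ioo_lt_top.ne,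
    fun c d _ hcd _ => ?_⟩
  rw [intAvg_const _ hcd.ne, intAvg_const _ hcd.ne, sub_self]
  exact sq_nonneg ε

end BMO

section Log

variable {c d : ℝ}

lemma continuousOn_mul_log_sq : ContinuousOn (fun x => x * log x ^ 2) (Ici 0) := by
  have hsqrt : Continuous fun x => 4 * (√x * log √x) ^ 2 :=
    ((continuous_mul_log.comp continuous_sqrt).pow 2).const_mul 4
  refine hsqrt.continuousOn.congr fun x hx => ?_
  dsimp only
  rw [log_sqrt hx, mul_pow, sq_sqrt hx]
  ring

lemma hasDerivAt_log_sq_primitive {x : ℝ} (hx : x ≠ 0) :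
    HasDerivAt (fun x => x * log x ^ 2 - 2 * (x * log x) + 2 * x) (log x ^ 2) x := by
  have hlog := hasDerivAt_log hx
  refine (((hasDerivAt_id' x).fun_mul (hlog.fun_pow 2)).fun_sub
    (((hasDerivAt_id' x).fun_mul hlog).const_mul 2)).fun_add
      ((hasDerivAt_id' x).const_mul 2) |>.congr_deriv ?_
  field_simp
  ring

lemma continuousOn_log_sq_primitive (hc : 0 ≤ c) :
    ContinuousOn (fun x => x * log x ^ 2 - 2 * (x * log x) + 2 * x) (Icc c d) :=
  ((continuousOn_mul_log_sq.mono fun _ hx => hc.trans hx.1).sub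
    (continuous_mul_log.const_mul 2).continuousOn).add (by fun_prop)

lemma intervalIntegrable_log_sq (hc : 0 ≤ c) (hcd : c ≤ d) :
    IntervalIntegrable (fun t => log t ^ 2) volume c d :=
  (intervalIntegrable_iff_integrableOn_Ioc_of_le hcd).2
    (intervalIntegral.integrableOn_deriv_of_nonneg (continuousOn_log_sq_primitive hc)
      (fun _ hx => hasDerivAt_log_sq_primitive (hc.trans_lt hx.1).ne') fun _ _ => sq_nonneg _)

lemma integral_log_sq (hc : 0 ≤ c) (hcd : c ≤ d) :
    ∫ t in c..d, log t ^ 2 = (d * log d ^ 2 - 2 * (d * log d) + 2 * d) -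
      (c * log c ^ 2 - 2 * (c * log c) + 2 * c) :=
  intervalIntegral.integral_eq_sub_of_hasDerivAt_of_le hcd (continuousOn_log_sq_primitive hc)
    (fun _ hx => hasDerivAt_log_sq_primitive (hc.trans_lt hx.1).ne')
    (intervalIntegrable_log_sq hc hcd)

lemma variance_log (hc : 0 ≤ c) (hcd : c < d) :
    intAvg (fun t => log t ^ 2) c d - intAvg log c d ^ 2 =
      1 - c * d * ((log d - log c) / (d - c)) ^ 2 := by
  have hlength : d - c ≠ 0 := (sub_pos.2 hcd).ne'
  rw [intAvg, intAvg, integral_log_sq hc hcd.le, integral_log]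
  field_simp
  ring

lemma memBMOe_log {r : ℝ} (hr : 0 ≤ r) : memBMOe 1 0 r log := by
  refine ⟨?_, ?_, fun c d hc hcd _ => ?_⟩
  · exact (intervalIntegrable_iff_integrableOn_Ioo_of_le hr).1
      intervalIntegral.intervalIntegrable_log'
  · exact (intervalIntegrable_iff_integrableOn_Ioo_of_le hr).1 (intervalIntegrable_log_sq le_rfl hr)
  · have hcd0 : 0 ≤ c * d := mul_nonneg hc (hc.trans hcd.le)
    rw [variance_log hc hcd]
    linarith [mul_nonneg hcd0 (sq_nonneg ((log d - log c) / (d - c)))]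

end Log

section ExponentialAverages

variable {ε : ℝ} {g : ℝ → ℝ}

/-- Integrability of `g` near `-∞` against the weight `exp (t / ε)`. -/
def ExpIntegrable (ε : ℝ) (g : ℝ → ℝ) : Prop :=
  ∀ u, IntegrableOn (fun t => g t * exp (t / ε)) (Iic u)

/-- The mean of `g` over `(-∞, u]` for the probability density `ε⁻¹ * exp ((t - u) / ε)`. The
coefficient `m_R` is the mean of `f'`. -/
noncomputable def expAvg (ε : ℝ) (g : ℝ → ℝ) (u : ℝ) : ℝ :=
  ε⁻¹ * exp (-u / ε) * ∫ t in Iic u, g t * exp (t / ε)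

lemma exp_neg_div_mul_exp_div (u ε : ℝ) : exp (-u / ε) * exp (u / ε) = 1 := by
  rw [← exp_add, neg_div, neg_add_cancel, exp_zero]

lemma hasDerivAt_exp_div (ε t : ℝ) : HasDerivAt (fun t => exp (t / ε)) (exp (t / ε) / ε) t :=
  ((hasDerivAt_id' t).div_const ε).exp.congr_deriv (mul_one_div _ _)

lemma hasDerivAt_integral_Iic {h : ℝ → ℝ} (hcont : Continuous h)
    (hint : ∀ u, IntegrableOn h (Iic u)) (u : ℝ) :
    HasDerivAt (fun u => ∫ t in Iic u, h t) (h u) u := by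
  have hsplit : ∀ v, ∫ t in Iic v, h t = (∫ t in (0 : ℝ)..v, h t) + ∫ t in Iic 0, h t := fun v =>
    eq_add_of_sub_eq (intervalIntegral.integral_Iic_sub_Iic (hint 0) (hint v))
  exact ((hcont.integral_hasStrictDerivAt 0 u).hasDerivAt.add_const _).congr_of_eventuallyEq
    (.of_forall hsplit)

lemma hasDerivAt_expAvg (hcont : Continuous g) (hint : ExpIntegrable ε g) (u : ℝ) :
    HasDerivAt (expAvg ε g) ((g u - expAvg ε g u) / ε) u := by
  have hfactor : HasDerivAt (fun u => ε⁻¹ * exp (-u / ε)) (ε⁻¹ * (exp (-u / ε) * (-1 / ε))) u :=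
    ((hasDerivAt_id' u).fun_neg.div_const ε).exp.const_mul _
  refine (hfactor.fun_mul (hasDerivAt_integral_Iic (by fun_prop) hint u)).congr_deriv ?_
  rw [expAvg]
  linear_combination g u / ε * exp_neg_div_mul_exp_div u ε

lemma continuous_expAvg (hcont : Continuous g) (hint : ExpIntegrable ε g) :
    Continuous (expAvg ε g) :=
  continuous_iff_continuousAt.2 fun u => (hasDerivAt_expAvg hcont hint u).continuousAt

lemma integral_deriv_mul_exp_Iic {F F' : ℝ → ℝ} (hF : ∀ t, HasDerivAt F (F' t) t)
    (hint : ExpIntegrable ε F) (hint' : ExpIntegrable ε F') (u : ℝ) :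
    ∫ t in Iic u, F' t * exp (t / ε) =
      F u * exp (u / ε) - (∫ t in Iic u, F t * exp (t / ε)) / ε := by
  have hderiv : ∀ t ∈ Iic u, HasDerivAt (fun t => F t * exp (t / ε))
      (F' t * exp (t / ε) + F t * exp (t / ε) / ε) t := fun t _ =>
    ((hF t).fun_mul (hasDerivAt_exp_div ε t)).congr_deriv (by ring)
  have hsum := (hint' u).add ((hint u).div_const ε)
  have hparts := integral_Iic_of_hasDerivAt_of_tendsto' hderiv hsum
    (tendsto_zero_of_hasDerivAt_of_integrableOn_Iic hderiv hsum (hint u))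
  rw [integral_add (hint' u) ((hint u).div_const ε), integral_div] at hparts
  linarith

lemma expAvg_of_hasDerivAt {F F' : ℝ → ℝ} (hF : ∀ t, HasDerivAt F (F' t) t)
    (hint : ExpIntegrable ε F) (hint' : ExpIntegrable ε F') (u : ℝ) :
    expAvg ε F' u = (F u - expAvg ε F u) / ε := by
  rw [expAvg, expAvg, integral_deriv_mul_exp_Iic hF hint hint']
  linear_combination F u / ε * exp_neg_div_mul_exp_div u ε

lemma expAvg_const (hε : 0 < ε) (a u : ℝ) : expAvg ε (fun _ => a) u = a := by
  have hexp : ∫ t in Iic u, exp (t / ε) = ε * exp (u / ε) := by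
    simpa only [inv_mul_eq_div, div_inv_eq_mul, mul_comm ε] using
      integral_exp_mul_Iic (inv_pos.2 hε) u
  rw [expAvg, integral_const_mul, hexp]
  linear_combination a * exp (-u / ε) * exp (u / ε) * inv_mul_cancel₀ hε.ne' +
    a * exp_neg_div_mul_exp_div u ε

lemma expIntegrable_const (hε : 0 < ε) (a : ℝ) : ExpIntegrable ε fun _ => a := fun u => by
  have hexp := integrableOn_exp_mul_Iic (inv_pos.2 hε) u
  simp only [inv_mul_eq_div] at hexp
  exact hexp.const_mul a

lemma le_expAvg_of_antitone (hε : 0 < ε) (hg : Antitone g) (hint : ExpIntegrable ε g) (u : ℝ) :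
    g u ≤ expAvg ε g u := by
  rw [← expAvg_const hε (g u) u]
  refine mul_le_mul_of_nonneg_left ?_ (by positivity)
  refine setIntegral_mono_on (expIntegrable_const hε _ u) (hint u) measurableSet_Iic fun t ht => ?_
  exact mul_le_mul_of_nonneg_right (hg ht) (exp_pos _).le

end ExponentialAverages

section Candidate

/-- The hypotheses under which the strip is foliated by right tangents: `f''` is antitone and `f`,
`f'`, `f''` have finite exponential means. -/
structure RightTangentAdmissible (ε : ℝ) (f : ℝ → ℝ) : Prop where
  contDiff : ContDiff ℝ 2 f
  expIntegrable : ExpIntegrable ε f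
  expIntegrable_deriv : ExpIntegrable ε (deriv f)
  expIntegrable_deriv_two : ExpIntegrable ε (deriv (deriv f))
  antitone_deriv_two : Antitone (deriv (deriv f))

/-- The Bellman candidate whose graph is ruled over the right tangents: on the tangent through `x`
to the upper boundary it is linear in `x₁`, with value `f u` at the lower end `(u, u²)` and slope
`m_R u`. -/
noncomputable def rightCandidate (ε : ℝ) (f : ℝ → ℝ) (x : ℝ × ℝ) : ℝ :=
  expAvg ε (deriv f) (uRpt ε x) * (x.1 - uRpt ε x) + f (uRpt ε x)

/-- The affine function of `x` whose graph is tangent to that of `rightCandidate ε f` along the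
right tangent with lower end `(w, w²)`. -/
noncomputable def supportPlane (ε : ℝ) (f : ℝ → ℝ) (w : ℝ) (x : ℝ × ℝ) : ℝ :=
  f w + deriv f w * (x.1 - w) +
    expAvg ε (deriv (deriv f)) w / 2 * (x.2 - 2 * w * x.1 + w ^ 2)

lemma supportPlane_average {ε : ℝ} {f : ℝ → ℝ} {w p q : ℝ} {x y z : ℝ × ℝ}
    (h : (p + q) • x = p • y + q • z) :
    p * supportPlane ε f w y + q * supportPlane ε f w z = (p + q) * supportPlane ε f w x := by
  have hfst : (p + q) * x.1 = p * y.1 + q * z.1 := congrArg Prod.fst h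
  have hsnd : (p + q) * x.2 = p * y.2 + q * z.2 := congrArg Prod.snd h
  unfold supportPlane
  linear_combination (expAvg ε (deriv (deriv f)) w * w - deriv f w) * hfst -
    expAvg ε (deriv (deriv f)) w / 2 * hsnd

variable {ε : ℝ} {x : ℝ × ℝ}

lemma sq_add_sub_uRpt (hx : x.2 - x.1 ^ 2 ≤ ε ^ 2) :
    (x.1 + ε - uRpt ε x) ^ 2 = ε ^ 2 - (x.2 - x.1 ^ 2) := by
  rw [uRpt, sub_sub_cancel, sq_sqrt (sub_nonneg.2 hx)]

lemma uRpt_of_mem_parabola (hε : 0 ≤ ε) (y : ℝ) : uRpt ε (y, y ^ 2) = y := by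
  rw [uRpt, sub_self, sub_zero, sqrt_sq hε, add_sub_cancel_right]

lemma rightCandidate_of_mem_parabola (hε : 0 ≤ ε) (f : ℝ → ℝ) (y : ℝ) :
    rightCandidate ε f (y, y ^ 2) = f y := by
  rw [rightCandidate, uRpt_of_mem_parabola hε, sub_self, mul_zero, zero_add]

namespace RightTangentAdmissible

variable {f : ℝ → ℝ}

lemma hasDerivAt (hf : RightTangentAdmissible ε f) (t : ℝ) : HasDerivAt f (deriv f t) t :=
  (hf.contDiff.differentiable two_ne_zero t).hasDerivAt

lemma hasDerivAt_deriv (hf : RightTangentAdmissible ε f) (t : ℝ) :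
    HasDerivAt (deriv f) (deriv (deriv f) t) t :=
  (hf.contDiff.differentiable_deriv_two t).hasDerivAt

lemma continuous_deriv (hf : RightTangentAdmissible ε f) :
    Continuous (deriv f) :=
  hf.contDiff.continuous_deriv one_le_two

lemma continuous_deriv_two (hf : RightTangentAdmissible ε f) :
    Continuous (deriv (deriv f)) := by
  have := hf.contDiff.continuous_iteratedDeriv 2 le_rfl
  rwa [iteratedDeriv_eq_iterate] at this

lemma continuous_rightCandidate (hf : RightTangentAdmissible ε f) :
    Continuous (rightCandidate ε f) := by
  have hcont := hf.contDiff.continuous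
  have hcoeff := continuous_expAvg hf.continuous_deriv hf.expIntegrable_deriv
  unfold rightCandidate uRpt
  fun_prop

lemma rightCandidate_eq_supportPlane (hf : RightTangentAdmissible ε f) (hε : ε ≠ 0)
    (hx : x.2 - x.1 ^ 2 ≤ ε ^ 2) :
    rightCandidate ε f x = supportPlane ε f (uRpt ε x) x := by
  have hu := sq_add_sub_uRpt hx
  rw [rightCandidate, supportPlane,
    expAvg_of_hasDerivAt hf.hasDerivAt_deriv hf.expIntegrable_deriv hf.expIntegrable_deriv_two]
  set u := uRpt ε x
  field_simp
  linear_combination -(deriv f u - expAvg ε (deriv f) u) * hu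

lemma hasDerivAt_supportPlane (hf : RightTangentAdmissible ε f) (hε : ε ≠ 0)
    (x : ℝ × ℝ) (w : ℝ) :
    HasDerivAt (fun w => supportPlane ε f w x)
      ((deriv (deriv f) w - expAvg ε (deriv (deriv f)) w) / (2 * ε) *
        ((w - x.1 - ε) ^ 2 - (ε ^ 2 - (x.2 - x.1 ^ 2)))) w := by
  have hslope := hasDerivAt_expAvg hf.continuous_deriv_two hf.expIntegrable_deriv_two w
  have hquadratic : HasDerivAt (fun w => x.2 - 2 * w * x.1 + w ^ 2) (-(2 * x.1) + 2 * w) w :=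
    ((((hasDerivAt_id' w).const_mul 2).mul_const x.1).const_sub x.2).fun_add (hasDerivAt_pow 2 w)
      |>.congr_deriv (by norm_num)
  refine (((hf.hasDerivAt w).fun_add ((hf.hasDerivAt_deriv w).fun_mul
    ((hasDerivAt_id' w).const_sub x.1))).fun_add
      ((hslope.div_const 2).fun_mul hquadratic)).congr_deriv ?_
  field_simp
  ring

/-- As a function of `w` the plane decreases up to `uRpt ε x` and increases from there up to the
parameter of the other tangent through `x`. -/
lemma rightCandidate_le_supportPlane (hf : RightTangentAdmissible ε f) (hε : 0 < ε)
    {w : ℝ} (hx : x.2 - x.1 ^ 2 ≤ ε ^ 2)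
    (hw : w ≤ x.1 + ε + √(ε ^ 2 - (x.2 - x.1 ^ 2))) :
    rightCandidate ε f x ≤ supportPlane ε f w x := by
  rw [hf.rightCandidate_eq_supportPlane hε.ne' hx]
  have hderiv := hf.hasDerivAt_supportPlane hε.ne' x
  have hu : uRpt ε x = x.1 + ε - √(ε ^ 2 - (x.2 - x.1 ^ 2)) := rfl
  set u := uRpt ε x
  set s := √(ε ^ 2 - (x.2 - x.1 ^ 2))
  have hs0 : 0 ≤ s := sqrt_nonneg _
  have hs2 : s ^ 2 = ε ^ 2 - (x.2 - x.1 ^ 2) := sq_sqrt (sub_nonneg.2 hx)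
  have hcont : Continuous fun w => supportPlane ε f w x :=
    continuous_iff_continuousAt.2 fun t => (hderiv t).continuousAt
  have hslope : ∀ t, (deriv (deriv f) t - expAvg ε (deriv (deriv f)) t) / (2 * ε) ≤ 0 := fun t =>
    div_nonpos_of_nonpos_of_nonneg (sub_nonpos.2
      (le_expAvg_of_antitone hε hf.antitone_deriv_two hf.expIntegrable_deriv_two t)) (by positivity)
  rcases le_total w u with hwu | huw
  · refine antitoneOn_of_deriv_nonpos (convex_Iic u) hcont.continuousOn
      (fun t _ => (hderiv t).differentiableAt.differentiableWithinAt) (fun t ht => ?_)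
      hwu self_mem_Iic hwu
    rw [interior_Iic, mem_Iio] at ht
    rw [(hderiv t).deriv, ← hs2]
    exact mul_nonpos_of_nonpos_of_nonneg (hslope t) (by nlinarith)
  · refine monotoneOn_of_deriv_nonneg (convex_Icc u (x.1 + ε + s)) hcont.continuousOn
      (fun t _ => (hderiv t).differentiableAt.differentiableWithinAt) (fun t ht => ?_)
      ⟨le_rfl, by linarith⟩ ⟨huw, hw⟩ huw
    rw [interior_Icc, mem_Ioo] at ht
    rw [(hderiv t).deriv, ← hs2]
    exact mul_nonneg_of_nonpos_of_nonpos (hslope t) (by nlinarith)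

end RightTangentAdmissible

end Candidate

section Splitting

variable {ε ε' w l r c d e : ℝ} {f φ : ℝ → ℝ} {x y z : ℝ × ℝ}

/-- The height of `y` above the line that touches the upper boundary of the strip over the
abscissa `w - ε`; this line carries the right tangent with lower end `(w, w²)`. -/
def tangentExcess (ε w : ℝ) (y : ℝ × ℝ) : ℝ :=
  y.2 - 2 * (w - ε) * y.1 + (w - ε) ^ 2 - ε ^ 2

/-- The part of the plane that does not lie above the tangent line with parameter `w` to the left
of its tangency point. Over the points of the strip in this region, `supportPlane ε f w` lies above
the graph of `rightCandidate ε f`. -/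
def supportRegion (ε w : ℝ) : Set (ℝ × ℝ) :=
  {y | w - ε ≤ y.1 ∨ tangentExcess ε w y ≤ 0}

lemma le_of_mem_supportRegion (hy : y ∈ supportRegion ε w) :
    w ≤ y.1 + ε + √(ε ^ 2 - (y.2 - y.1 ^ 2)) := by
  by_cases hwy : w - ε ≤ y.1
  · linarith [sqrt_nonneg (ε ^ 2 - (y.2 - y.1 ^ 2))]
  · have hbelow : y.2 - 2 * (w - ε) * y.1 + (w - ε) ^ 2 - ε ^ 2 ≤ 0 := hy.resolve_left hwy
    have : w - ε - y.1 ≤ √(ε ^ 2 - (y.2 - y.1 ^ 2)) := le_sqrt_of_sq_le (by linarith)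
    linarith

lemma tangentExcess_uRpt (hx : x.2 - x.1 ^ 2 ≤ ε ^ 2) : tangentExcess ε (uRpt ε x) x = 0 := by
  rw [tangentExcess]
  linear_combination sq_add_sub_uRpt hx

lemma tangentExcess_average {p q : ℝ} (h : (p + q) • x = p • y + q • z) :
    p * tangentExcess ε w y + q * tangentExcess ε w z = (p + q) * tangentExcess ε w x := by
  have hfst : (p + q) * x.1 = p * y.1 + q * z.1 := congrArg Prod.fst h
  have hsnd : (p + q) * x.2 = p * y.2 + q * z.2 := congrArg Prod.snd h
  unfold tangentExcess
  linear_combination 2 * (w - ε) * hfst - hsnd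

lemma RightTangentAdmissible.average_le_rightCandidate (hf : RightTangentAdmissible ε f)
    (hε : 0 < ε) {p q : ℝ} (hp : 0 ≤ p) (hq : 0 ≤ q) (h : (p + q) • x = p • y + q • z)
    (hx : x.2 - x.1 ^ 2 ≤ ε ^ 2) (hy : y.2 - y.1 ^ 2 ≤ ε ^ 2) (hz : z.2 - z.1 ^ 2 ≤ ε ^ 2)
    (hyw : y ∈ supportRegion ε (uRpt ε x)) (hzw : z ∈ supportRegion ε (uRpt ε x)) :
    p * rightCandidate ε f y + q * rightCandidate ε f z ≤ (p + q) * rightCandidate ε f x := by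
  rw [hf.rightCandidate_eq_supportPlane hε.ne' hx, ← supportPlane_average h]
  gcongr
  · exact hf.rightCandidate_le_supportPlane hε hy (le_of_mem_supportRegion hyw)
  · exact hf.rightCandidate_le_supportPlane hε hz (le_of_mem_supportRegion hzw)

lemma exists_tangentExcess_eq_zero {γ : ℝ → ℝ × ℝ} {a b : ℝ} (hγ : ContinuousOn γ (uIcc a b))
    (hvar : ∀ s ∈ uIcc a b, (γ s).2 - (γ s).1 ^ 2 < ε ^ 2) (ha : γ a ∉ supportRegion ε w)
    (hb : w - ε < (γ b).1) :
    ∃ s ∈ uIcc a b, (γ s).1 < w - ε ∧ tangentExcess ε w (γ s) = 0 := by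
  set G : ℝ → ℝ := fun s => min (w - ε - (γ s).1) (tangentExcess ε w (γ s))
  have hG : ContinuousOn G (uIcc a b) := by
    unfold G tangentExcess
    fun_prop
  obtain ⟨hleft, habove⟩ : (γ a).1 < w - ε ∧ 0 < tangentExcess ε w (γ a) := by
    simpa only [supportRegion, mem_ofPred_eq, not_or, not_le] using ha
  have hGa : 0 ≤ G a := le_min (sub_pos.2 hleft).le habove.le
  have hGb : G b ≤ 0 := (min_le_left _ _).trans (sub_neg.2 hb).le
  obtain ⟨s, hs, hGs⟩ := intermediate_value_uIcc hG (mem_uIcc.2 (.inr ⟨hGb, hGa⟩))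
  have hne : w - ε - (γ s).1 ≠ 0 := fun h => by
    have hexcess : 0 ≤ tangentExcess ε w (γ s) := hGs.ge.trans (min_le_right _ _)
    rw [tangentExcess, sub_eq_zero.1 h] at hexcess
    linarith [hvar s hs]
  have hle : 0 ≤ w - ε - (γ s).1 := hGs.ge.trans (min_le_left _ _)
  refine ⟨s, hs, sub_pos.1 (hle.lt_of_ne' hne), ?_⟩
  rcases min_choice (w - ε - (γ s).1) (tangentExcess ε w (γ s)) with hmin | hmin
  · exact absurd (hmin.symm.trans hGs) hne
  · exact hmin.symm.trans hGs

lemma mul_add_le_of_average {p q κ M : ℝ} (hp : 0 ≤ p) (hq : 0 ≤ q) (hM : 0 < M)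
    (h : (p + q) • x = p • y + q • z) (hyx : y.1 + κ ≤ x.1) (hy : -M ≤ y.1) (hz : z.1 ≤ M) :
    κ / (2 * M) * (p + q) ≤ q := by
  have hfst : (p + q) * x.1 = p * y.1 + q * z.1 := congrArg Prod.fst h
  rw [div_mul_eq_mul_div, div_le_iff₀ (by positivity)]
  calc κ * (p + q) ≤ (x.1 - y.1) * (p + q) :=
        mul_le_mul_of_nonneg_right (by linarith) (add_nonneg hp hq)
    _ = q * (z.1 - y.1) := by linear_combination hfst
    _ ≤ q * (2 * M) := mul_le_mul_of_nonneg_left (by linarith) hq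

lemma add_sqrt_le_of_uRpt (hx : x.2 - x.1 ^ 2 ≤ ε' ^ 2) :
    uRpt ε x - ε + √(ε ^ 2 - ε' ^ 2) ≤ x.1 := by
  have : √(ε ^ 2 - ε' ^ 2) ≤ √(ε ^ 2 - (x.2 - x.1 ^ 2)) := sqrt_le_sqrt (by linarith)
  rw [uRpt]
  linarith

lemma mem_supportRegion_of_crossing {p q M : ℝ} (hp : 0 ≤ p) (hq : 0 < q) (hM : 0 < M)
    (h : (p + q) • x = p • y + q • z) (hε' : ε' ^ 2 ≤ ε ^ 2) (hx : x.2 - x.1 ^ 2 ≤ ε' ^ 2)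
    (hyw : y.1 < uRpt ε x - ε) (hy0 : tangentExcess ε (uRpt ε x) y = 0) (hy : |y.1| ≤ M)
    (hz : |z.1| ≤ M) :
    y ∈ supportRegion ε (uRpt ε x) ∧ z ∈ supportRegion ε (uRpt ε x) ∧
      √(ε ^ 2 - ε' ^ 2) / (2 * M) * (p + q) ≤ q := by
  have hz0 : tangentExcess ε (uRpt ε x) z = 0 := by
    have hsum := tangentExcess_average (ε := ε) (w := uRpt ε x) h
    rw [hy0, tangentExcess_uRpt (hx.trans hε'), mul_zero, mul_zero, zero_add] at hsum
    exact (mul_eq_zero.1 hsum).resolve_left hq.ne'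
  refine ⟨.inr hy0.le, .inr hz0.le, mul_add_le_of_average hp hq.le hM h ?_ (abs_le.1 hy).1
    (abs_le.1 hz).2⟩
  linarith [add_sqrt_le_of_uRpt (ε := ε) hx]

namespace memBMOe

lemma bellmanPoint_split (hφ : memBMOe ε l r φ) (hlc : l ≤ c) (hce : c < e) (hed : e < d)
    (hdr : d ≤ r) : ((e - c) + (d - e)) • bellmanPoint φ c d =
      (e - c) • bellmanPoint φ c e + (d - e) • bellmanPoint φ e d := by
  rw [add_comm, sub_add_sub_cancel]
  exact Prod.ext (intAvg_split hφ.1 hlc hce hed hdr) (intAvg_split hφ.2.1 hlc hce hed hdr)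

lemma continuousOn_bellmanPoint_right (hφ : memBMOe ε l r φ) (hlc : l ≤ c) (hce : c < e)
    (hdr : d ≤ r) : ContinuousOn (fun s => bellmanPoint φ c s) (Icc e d) :=
  (continuousOn_intAvg_right hφ.1 hlc hce hdr).prodMk
    (continuousOn_intAvg_right hφ.2.1 hlc hce hdr)

lemma continuousOn_bellmanPoint_left (hφ : memBMOe ε l r φ) (hlc : l ≤ c) (hed : e < d)
    (hdr : d ≤ r) : ContinuousOn (fun s => bellmanPoint φ s d) (Icc c e) :=
  (continuousOn_intAvg_left hφ.1 hlc hed hdr).prodMk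
    (continuousOn_intAvg_left hφ.2.1 hlc hed hdr)

lemma exists_split_right (hφ : memBMOe ε' l r φ) (hε' : ε' ^ 2 < ε ^ 2) {M m : ℝ} (hM0 : 0 < M)
    (hM : ∀ t, |φ t| ≤ M) (hlc : l ≤ c) (hcm : c < m) (hmd : m < d) (hdr : d ≤ r)
    (hm : bellmanPoint φ c m ∉ supportRegion ε (uRpt ε (bellmanPoint φ c d))) :
    ∃ e, m ≤ e ∧ e < d ∧ √(ε ^ 2 - ε' ^ 2) / (2 * M) * (d - c) ≤ d - e ∧
      bellmanPoint φ c e ∈ supportRegion ε (uRpt ε (bellmanPoint φ c d)) ∧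
      bellmanPoint φ e d ∈ supportRegion ε (uRpt ε (bellmanPoint φ c d)) := by
  have hvar : (bellmanPoint φ c d).2 - (bellmanPoint φ c d).1 ^ 2 ≤ ε' ^ 2 :=
    hφ.2.2 c d hlc (hcm.trans hmd) hdr
  have hright : uRpt ε (bellmanPoint φ c d) - ε < (bellmanPoint φ c d).1 := by
    linarith [add_sqrt_le_of_uRpt (ε := ε) hvar, sqrt_pos.2 (sub_pos.2 hε')]
  have huIcc : uIcc m d = Icc m d := uIcc_of_le hmd.le
  obtain ⟨e, he, hew, he0⟩ := exists_tangentExcess_eq_zero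
    (huIcc ▸ hφ.continuousOn_bellmanPoint_right hlc hcm hdr)
    (fun s hs => (hφ.2.2 c s hlc (hcm.trans_le (huIcc ▸ hs).1)
      ((huIcc ▸ hs).2.trans hdr)).trans_lt hε') hm hright
  rw [huIcc] at he
  have hce : c < e := hcm.trans_le he.1
  have hed : e < d := he.2.lt_of_ne fun h => (h ▸ hew).not_gt hright
  obtain ⟨hleft_mem, hright_mem, hratio⟩ := mem_supportRegion_of_crossing (sub_pos.2 hce).le
    (sub_pos.2 hed) hM0 (hφ.bellmanPoint_split hlc hce hed hdr) hε'.le hvar hew he0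
    (abs_intAvg_le hM hce) (abs_intAvg_le hM hed)
  rw [add_comm, sub_add_sub_cancel] at hratio
  exact ⟨e, he.1, hed, hratio, hleft_mem, hright_mem⟩

lemma exists_split_left (hφ : memBMOe ε' l r φ) (hε' : ε' ^ 2 < ε ^ 2) {M m : ℝ} (hM0 : 0 < M)
    (hM : ∀ t, |φ t| ≤ M) (hlc : l ≤ c) (hcm : c < m) (hmd : m < d) (hdr : d ≤ r)
    (hm : bellmanPoint φ m d ∉ supportRegion ε (uRpt ε (bellmanPoint φ c d))) :
    ∃ e, c < e ∧ e ≤ m ∧ √(ε ^ 2 - ε' ^ 2) / (2 * M) * (d - c) ≤ e - c ∧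
      bellmanPoint φ c e ∈ supportRegion ε (uRpt ε (bellmanPoint φ c d)) ∧
      bellmanPoint φ e d ∈ supportRegion ε (uRpt ε (bellmanPoint φ c d)) := by
  have hvar : (bellmanPoint φ c d).2 - (bellmanPoint φ c d).1 ^ 2 ≤ ε' ^ 2 :=
    hφ.2.2 c d hlc (hcm.trans hmd) hdr
  have hright : uRpt ε (bellmanPoint φ c d) - ε < (bellmanPoint φ c d).1 := by
    linarith [add_sqrt_le_of_uRpt (ε := ε) hvar, sqrt_pos.2 (sub_pos.2 hε')]
  have huIcc : uIcc m c = Icc c m := uIcc_of_ge hcm.le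
  obtain ⟨e, he, hew, he0⟩ := exists_tangentExcess_eq_zero (γ := fun s => bellmanPoint φ s d)
    (huIcc ▸ hφ.continuousOn_bellmanPoint_left hlc hmd hdr)
    (fun s hs => (hφ.2.2 s d (hlc.trans (huIcc ▸ hs).1) ((huIcc ▸ hs).2.trans_lt hmd)
      hdr).trans_lt hε') hm hright
  rw [huIcc] at he
  have hed : e < d := he.2.trans_lt hmd
  have hce : c < e := he.1.lt_of_ne' fun h => (h ▸ hew).not_gt hright
  have hsplit := hφ.bellmanPoint_split hlc hce hed hdr
  rw [add_comm, add_comm (_ • _)] at hsplit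
  obtain ⟨hright_mem, hleft_mem, hratio⟩ := mem_supportRegion_of_crossing (sub_pos.2 hed).le
    (sub_pos.2 hce) hM0 hsplit hε'.le hvar hew he0 (abs_intAvg_le hM hed) (abs_intAvg_le hM hce)
  rw [sub_add_sub_cancel] at hratio
  exact ⟨e, hce, he.2, hratio, hleft_mem, hright_mem⟩

lemma exists_split (hφ : memBMOe ε' l r φ) (hε' : ε' ^ 2 < ε ^ 2) {M : ℝ} (hM0 : 0 < M)
    (hM : ∀ t, |φ t| ≤ M) (hlc : l ≤ c) (hcd : c < d) (hdr : d ≤ r) :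
    ∃ e, (c < e ∧ e < d) ∧
      min (1 / 2) (√(ε ^ 2 - ε' ^ 2) / (2 * M)) * (d - c) ≤ e - c ∧
      min (1 / 2) (√(ε ^ 2 - ε' ^ 2) / (2 * M)) * (d - c) ≤ d - e ∧
      bellmanPoint φ c e ∈ supportRegion ε (uRpt ε (bellmanPoint φ c d)) ∧
      bellmanPoint φ e d ∈ supportRegion ε (uRpt ε (bellmanPoint φ c d)) := by
  set κ := √(ε ^ 2 - ε' ^ 2) / (2 * M)
  have hhalf : min (1 / 2) κ * (d - c) ≤ 1 / 2 * (d - c) :=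
    mul_le_mul_of_nonneg_right (min_le_left _ _) (sub_pos.2 hcd).le
  have hκ : min (1 / 2) κ * (d - c) ≤ κ * (d - c) :=
    mul_le_mul_of_nonneg_right (min_le_right _ _) (sub_pos.2 hcd).le
  obtain ⟨m, hm⟩ : ∃ m, m = (c + d) / 2 := ⟨_, rfl⟩
  have hcm : c < m := by linarith
  have hmd : m < d := by linarith
  by_cases hleft : bellmanPoint φ c m ∈ supportRegion ε (uRpt ε (bellmanPoint φ c d))
  · by_cases hright : bellmanPoint φ m d ∈ supportRegion ε (uRpt ε (bellmanPoint φ c d))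
    · exact ⟨m, ⟨hcm, hmd⟩, by linarith, by linarith, hleft, hright⟩
    · obtain ⟨e, hce, hem, hratio, hmem⟩ :=
        hφ.exists_split_left hε' hM0 hM hlc hcm hmd hdr hright
      exact ⟨e, ⟨hce, hem.trans_lt hmd⟩, hκ.trans hratio, by linarith, hmem⟩
  · obtain ⟨e, hme, hed, hratio, hmem⟩ := hφ.exists_split_right hε' hM0 hM hlc hcm hmd hdr hleft
    exact ⟨e, ⟨hcm.trans_le hme, hed⟩, by linarith, hκ.trans hratio, hmem⟩

lemma splitsAtRatio (hφ : memBMOe ε' l r φ) (hf : RightTangentAdmissible ε f) (hε : 0 < ε)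
    (hε' : ε' ^ 2 < ε ^ 2) {M : ℝ} (hM0 : 0 < M) (hM : ∀ t, |φ t| ≤ M) :
    SplitsAtRatio (min (1 / 2) (√(ε ^ 2 - ε' ^ 2) / (2 * M))) l r
      fun c d => -((d - c) * rightCandidate ε f (bellmanPoint φ c d)) := by
  intro c d hlc hcd hdr
  obtain ⟨e, ⟨hce, hed⟩, hratio_left, hratio_right, hleft, hright⟩ :=
    hφ.exists_split hε' hM0 hM hlc hcd hdr
  have hvar : ∀ a b, l ≤ a → a < b → b ≤ r →
      (bellmanPoint φ a b).2 - (bellmanPoint φ a b).1 ^ 2 ≤ ε ^ 2 := fun a b hla hab hbr =>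
    (hφ.2.2 a b hla hab hbr).trans hε'.le
  have hconcave := hf.average_le_rightCandidate hε (sub_pos.2 hce).le (sub_pos.2 hed).le
    (hφ.bellmanPoint_split hlc hce hed hdr) (hvar c d hlc hcd hdr)
    (hvar c e hlc hce (hed.le.trans hdr)) (hvar e d (hlc.trans hce.le) hed hdr) hleft hright
  exact ⟨e, hratio_left, hratio_right, by linear_combination hconcave⟩

end memBMOe

lemma RightTangentAdmissible.intAvg_le_of_bounded (hf : RightTangentAdmissible ε f) (hε : 0 < ε)
    (hφ : memBMOe ε' l r φ) (hε' : ε' ^ 2 < ε ^ 2) {M : ℝ} (hM0 : 0 < M) (hM : ∀ t, |φ t| ≤ M)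
    (hlr : l < r) :
    intAvg (fun t => f (φ t)) l r ≤ rightCandidate ε f (bellmanPoint φ l r) := by
  have hθ : 0 < min (1 / 2) (√(ε ^ 2 - ε' ^ 2) / (2 * M)) :=
    lt_min one_half_pos (div_pos (sqrt_pos.2 (sub_pos.2 hε')) (by positivity))
  have hinduction := intAvg_le_of_splitsAtRatio hf.continuous_rightCandidate hφ.1.1 hM hθ hlr
    (hφ.splitsAtRatio hf hε hε' hM0 hM)
  simpa only [rightCandidate_of_mem_parabola hε.le] using hinduction

end Splitting

section Domination

variable {g g' : ℝ → ℝ}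

/-- Monotonicity of `g`, in one direction or the other, near `+∞`. -/
def EventuallyMonotone (g : ℝ → ℝ) : Prop :=
  ∃ K, MonotoneOn g (Ici K) ∨ AntitoneOn g (Ici K)

lemma EventuallyMonotone.eventually_sign (hg : EventuallyMonotone g) :
    (∀ᶠ t in atTop, 0 ≤ g t) ∨ ∀ᶠ t in atTop, g t ≤ 0 := by
  by_contra hchange
  simp only [not_or, not_eventually, not_le] at hchange
  obtain ⟨hneg, hpos⟩ := hchange
  obtain ⟨K, hmono | hanti⟩ := hg
  · obtain ⟨s, hs, hKs⟩ := (hpos.and_eventually (eventually_ge_atTop K)).exists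
    obtain ⟨t, ht, hst⟩ := (hneg.and_eventually (eventually_ge_atTop s)).exists
    exact (hs.trans_le (hmono hKs (hKs.trans hst) hst)).not_gt ht
  · obtain ⟨s, hs, hKs⟩ := (hneg.and_eventually (eventually_ge_atTop K)).exists
    obtain ⟨t, ht, hst⟩ := (hpos.and_eventually (eventually_ge_atTop s)).exists
    exact (ht.trans_le (hanti hKs (hKs.trans hst) hst)).not_gt hs

lemma eventuallyMonotone_of_deriv (hg : ∀ t, HasDerivAt g (g' t) t) (hg' : EventuallyMonotone g') :
    EventuallyMonotone g := by
  have hcont : Continuous g := continuous_iff_continuousAt.2 fun t => (hg t).continuousAt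
  have hderiv : deriv g = g' := funext fun t => (hg t).deriv
  have hdiff : Differentiable ℝ g := fun t => (hg t).differentiableAt
  rcases hg'.eventually_sign with hsign | hsign <;> obtain ⟨K, hK⟩ := eventually_atTop.1 hsign
  · exact ⟨K, .inl (monotoneOn_of_deriv_nonneg (convex_Ici K) hcont.continuousOn
      hdiff.differentiableOn fun t ht => hderiv ▸ hK t (interior_subset ht))⟩
  · exact ⟨K, .inr (antitoneOn_of_deriv_nonpos (convex_Ici K) hcont.continuousOn
      hdiff.differentiableOn fun t ht => hderiv ▸ hK t (interior_subset ht))⟩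

lemma EventuallyMonotone.exists_abs_le_add (hg : EventuallyMonotone g) (hcont : Continuous g) :
    ∃ C, ∀ x y, 0 ≤ y → y ≤ x → |g y| ≤ C + |g x| := by
  obtain ⟨K, hmono⟩ := hg
  obtain ⟨C, hC⟩ := (isCompact_Icc (a := 0) (b := max K 0)).exists_bound_of_continuousOn
    hcont.continuousOn
  refine ⟨C, fun x y hy hyx => ?_⟩
  rcases le_total y (max K 0) with hyK | hKy
  · exact (hC y ⟨hy, hyK⟩).trans (le_add_of_nonneg_right (abs_nonneg _))
  · have hstart : |g (max K 0)| ≤ C := hC _ ⟨le_max_right _ _, le_rfl⟩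
    have hK : max K 0 ∈ Ici K := le_max_left K 0
    have hbetween : |g y| ≤ max |g (max K 0)| |g x| := by
      rcases hmono with hmono | hanti
      · exact abs_le_max_abs_abs (hmono hK (hK.trans hKy) hKy)
          (hmono (hK.trans hKy) (hK.trans (hKy.trans hyx)) hyx)
      · exact max_comm |g x| _ ▸ abs_le_max_abs_abs
          (hanti (hK.trans hKy) (hK.trans (hKy.trans hyx)) hyx) (hanti hK (hK.trans hKy) hKy)
    refine hbetween.trans (max_le ?_ ?_) <;>
      linarith [abs_nonneg (g x), abs_nonneg (g (max K 0))]

lemma RightTangentAdmissible.exists_abs_le_add {ε : ℝ} {f : ℝ → ℝ}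
    (hf : RightTangentAdmissible ε f) : ∃ C, ∀ x, ∀ y ∈ uIcc 0 x, |f y| ≤ C + |f x| := by
  have hderiv_neg : ∀ t, HasDerivAt (fun t => f (-t)) (-deriv f (-t)) t := fun t =>
    ((hf.hasDerivAt (-t)).scomp t (hasDerivAt_neg t)).congr_deriv (neg_one_smul ℝ _)
  have hderiv_two_neg : ∀ t, HasDerivAt (fun t => -deriv f (-t)) (deriv (deriv f) (-t)) t :=
    fun t => ((hf.hasDerivAt_deriv (-t)).scomp t (hasDerivAt_neg t)).fun_neg.congr_deriv
      ((congrArg _ (neg_one_smul ℝ _)).trans (neg_neg _))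
  obtain ⟨C₁, hC₁⟩ := (eventuallyMonotone_of_deriv hf.hasDerivAt
    (eventuallyMonotone_of_deriv hf.hasDerivAt_deriv
      ⟨0, .inr (hf.antitone_deriv_two.antitoneOn _)⟩)).exists_abs_le_add hf.contDiff.continuous
  obtain ⟨C₂, hC₂⟩ := (eventuallyMonotone_of_deriv hderiv_neg
    (eventuallyMonotone_of_deriv hderiv_two_neg
      ⟨0, .inl fun s _ t _ hst => hf.antitone_deriv_two (neg_le_neg hst)⟩)).exists_abs_le_add
        (hf.contDiff.continuous.comp continuous_neg)
  refine ⟨max C₁ C₂, fun x y hy => ?_⟩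
  rcases mem_uIcc.1 hy with ⟨h0y, hyx⟩ | ⟨hxy, hy0⟩
  · exact (hC₁ x y h0y hyx).trans (add_le_add_left (le_max_left _ _) _)
  · have hreflected := hC₂ (-x) (-y) (neg_nonneg.2 hy0) (neg_le_neg hxy)
    simp only [neg_neg] at hreflected
    exact hreflected.trans (add_le_add_left (le_max_right _ _) _)

end Domination

section UpperBound

/-- Truncation at height `n + 1` followed by contraction towards the origin. The factor
`n / (n + 1) < 1` leaves room between the BMO norm and `ε`. -/
noncomputable def shrunkTruncation (n : ℕ) (x : ℝ) : ℝ :=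
  (n / (n + 1) : ℝ) * max (-(n + 1) : ℝ) (min (n + 1 : ℝ) x)

lemma natCast_div_add_one_nonneg (n : ℕ) : (0 : ℝ) ≤ n / (n + 1) := by positivity

lemma natCast_div_add_one_lt_one (n : ℕ) : (n / (n + 1) : ℝ) < 1 :=
  (div_lt_one (by positivity)).2 (lt_add_one _)

lemma lipschitzWith_shrunkTruncation (n : ℕ) :
    LipschitzWith ⟨n / (n + 1), natCast_div_add_one_nonneg n⟩ (shrunkTruncation n) :=
  .of_dist_le_mul fun x y => by
    have htruncate :=
      ((LipschitzWith.id.const_min (n + 1 : ℝ)).const_max (-(n + 1) : ℝ)).dist_le_mul x y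
    rw [NNReal.coe_one, one_mul] at htruncate
    rw [shrunkTruncation, shrunkTruncation, dist_eq, ← mul_sub, abs_mul,
      abs_of_nonneg (natCast_div_add_one_nonneg n)]
    exact mul_le_mul_of_nonneg_left htruncate (natCast_div_add_one_nonneg n)

lemma shrunkTruncation_mem_uIcc (n : ℕ) (x : ℝ) : shrunkTruncation n x ∈ uIcc 0 x := by
  have hn : (0 : ℝ) < n + 1 := by positivity
  have hfactor := natCast_div_add_one_nonneg n
  have hfactor1 := (natCast_div_add_one_lt_one n).le
  rw [shrunkTruncation, mem_uIcc]
  rcases le_total 0 x with hx | hx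
  · have hmin : 0 ≤ min (n + 1 : ℝ) x := le_min hn.le hx
    rw [max_eq_right (by linarith)]
    exact .inl ⟨mul_nonneg hfactor hmin,
      (mul_le_of_le_one_left hmin hfactor1).trans (min_le_right _ _)⟩
  · rw [min_eq_right (by linarith)]
    have hmax : max (-(n + 1 : ℝ)) x ≤ 0 := max_le (by linarith) hx
    exact .inr ⟨(le_max_right _ _).trans (le_mul_of_le_one_left hmax hfactor1),
      mul_nonpos_of_nonneg_of_nonpos hfactor hmax⟩

lemma abs_shrunkTruncation_le (n : ℕ) (x : ℝ) : |shrunkTruncation n x| ≤ n + 1 := by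
  rw [shrunkTruncation, abs_mul, abs_of_nonneg (natCast_div_add_one_nonneg n)]
  refine (mul_le_of_le_one_left (abs_nonneg _) (natCast_div_add_one_lt_one n).le).trans ?_
  exact abs_le.2 ⟨le_max_left _ _, max_le (neg_le_self (by positivity)) (min_le_left _ _)⟩

lemma abs_shrunkTruncation_le_abs (n : ℕ) (x : ℝ) : |shrunkTruncation n x| ≤ |x| := by
  simpa only [sub_zero] using abs_sub_left_of_mem_uIcc (shrunkTruncation_mem_uIcc n x)

lemma tendsto_shrunkTruncation (x : ℝ) :
    Tendsto (fun n => shrunkTruncation n x) atTop (𝓝 x) := by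
  have hfactor : Tendsto (fun n : ℕ => (n / (n + 1) : ℝ) * x) atTop (𝓝 x) := by
    simpa only [one_mul] using (tendsto_natCast_div_add_atTop (1 : ℝ)).mul_const x
  refine hfactor.congr' ?_
  filter_upwards [tendsto_natCast_atTop_atTop.eventually_ge_atTop |x|] with n hn
  obtain ⟨hlow, hhigh⟩ := abs_le.1 hn
  rw [shrunkTruncation, min_eq_right (by linarith), max_eq_right (by linarith)]

variable {ε l r : ℝ} {f φ : ℝ → ℝ}

lemma tendsto_intAvg_comp_shrunkTruncation {g bound : ℝ → ℝ} (hg : Continuous g) (hlr : l ≤ r)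
    (hφ : IntegrableOn φ (Ioo l r)) (hbound : IntegrableOn bound (Ioo l r))
    (hle : ∀ n t, |g (shrunkTruncation n (φ t))| ≤ bound t) :
    Tendsto (fun n => intAvg (fun t => g (shrunkTruncation n (φ t))) l r) atTop
      (𝓝 (intAvg (fun t => g (φ t)) l r)) :=
  tendsto_intAvg_of_dominated hlr (fun n =>
    (hg.comp (lipschitzWith_shrunkTruncation n).continuous).comp_aestronglyMeasurable hφ.1)
    hbound hle fun t => (hg.tendsto _).comp (tendsto_shrunkTruncation (φ t))

lemma memBMOe.tendsto_bellmanPoint_shrunkTruncation (hφ : memBMOe ε l r φ) (hlr : l ≤ r) :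
    Tendsto (fun n => bellmanPoint (fun t => shrunkTruncation n (φ t)) l r) atTop
      (𝓝 (bellmanPoint φ l r)) := by
  refine Tendsto.prodMk_nhds ?_ ?_
  · exact tendsto_intAvg_comp_shrunkTruncation continuous_id hlr hφ.1 hφ.1.abs
      fun n t => abs_shrunkTruncation_le_abs n (φ t)
  · refine tendsto_intAvg_comp_shrunkTruncation (continuous_pow 2) hlr hφ.1 hφ.2.1 fun n t => ?_
    rw [abs_sq]
    exact sq_le_sq.2 (abs_shrunkTruncation_le_abs n (φ t))

theorem RightTangentAdmissible.intAvg_le_rightCandidate (hf : RightTangentAdmissible ε f)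
    (hε : 0 < ε) (hlr : l < r) (hφ : memBMOe ε l r φ)
    (hint : IntegrableOn (fun t => f (φ t)) (Ioo l r)) :
    intAvg (fun t => f (φ t)) l r ≤ rightCandidate ε f (bellmanPoint φ l r) := by
  obtain ⟨C, hC⟩ := hf.exists_abs_le_add
  have hbound : IntegrableOn (fun t => C + |f (φ t)|) (Ioo l r) :=
    (integrableOn_const measure_Ioo_lt_top.ne).add hint.abs
  have hlim := tendsto_intAvg_comp_shrunkTruncation hf.contDiff.continuous hlr.le hφ.1 hbound
    fun n t => hC _ _ (shrunkTruncation_mem_uIcc n (φ t))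
  have hpoint := (hf.continuous_rightCandidate.tendsto _).comp
    (hφ.tendsto_bellmanPoint_shrunkTruncation hlr.le)
  refine le_of_tendsto_of_tendsto' hlim hpoint fun n => ?_
  have hsmaller : (n / (n + 1) * ε) ^ 2 < ε ^ 2 :=
    pow_lt_pow_left₀ (mul_lt_of_lt_one_left hε (natCast_div_add_one_lt_one n))
      (mul_nonneg (natCast_div_add_one_nonneg n) hε.le) two_ne_zero
  exact hf.intAvg_le_of_bounded hε (hφ.comp_lipschitz (lipschitzWith_shrunkTruncation n)) hsmaller
    (by positivity) (fun t => abs_shrunkTruncation_le n (φ t)) hlr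

end UpperBound

section Optimizer

variable {ε u α : ℝ} {F : ℝ → ℝ}

/-- The extremal function on `(0, 1)`: logarithmic on `(0, α]` and equal to `u` on `[α, 1)`. -/
noncomputable def truncatedLog (ε u α t : ℝ) : ℝ :=
  u + ε * min 0 (log t - log α)

lemma truncatedLog_of_le {t : ℝ} (ht : 0 < t) (htα : t ≤ α) :
    truncatedLog ε u α t = u + ε * (log t - log α) := by
  rw [truncatedLog, min_eq_right (sub_nonpos.2 (log_le_log ht htα))]

lemma truncatedLog_of_ge {t : ℝ} (hα : 0 < α) (hαt : α ≤ t) : truncatedLog ε u α t = u := by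
  rw [truncatedLog, min_eq_left (sub_nonneg.2 (log_le_log hα hαt)), mul_zero, add_zero]

lemma memBMOe_truncatedLog (hε : 0 ≤ ε) (u α : ℝ) : memBMOe ε 0 1 (truncatedLog ε u α) := by
  have hlipschitz : LipschitzWith ⟨ε, hε⟩ fun x => u + ε * min 0 (x - log α) :=
    .of_dist_le_mul fun x y => by
      have hmin := (LipschitzWith.id.const_min 0).dist_le_mul (x - log α) (y - log α)
      rw [NNReal.coe_one, one_mul, dist_sub_right] at hmin
      rw [dist_add_left, dist_eq, ← mul_sub, abs_mul, abs_of_nonneg hε]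
      exact mul_le_mul_of_nonneg_left hmin hε
  have hcomp := (memBMOe_log zero_le_one).comp_lipschitz hlipschitz
  rwa [mul_one] at hcomp

lemma mapsTo_mul_exp (hε : 0 < ε) (hα : 0 < α) :
    MapsTo (fun t => α * exp ((t - u) / ε)) (Iic u) (Ioc 0 α) := fun _ ht =>
  ⟨by positivity, mul_le_of_le_one_right hα.le
    (exp_le_one_iff.2 (div_nonpos_of_nonpos_of_nonneg (sub_nonpos.2 ht) hε.le))⟩

lemma invOn_truncatedLog (hε : 0 < ε) (hα : 0 < α) :
    InvOn (truncatedLog ε u α) (fun t => α * exp ((t - u) / ε)) (Iic u) (Ioc 0 α) := by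
  refine ⟨fun t ht => ?_, fun s hs => ?_⟩
  · obtain ⟨hpos, hle⟩ := mapsTo_mul_exp hε hα ht
    rw [truncatedLog_of_le hpos hle, log_mul hα.ne' (exp_pos _).ne', log_exp]
    field_simp
    ring
  · simp only [truncatedLog_of_le hs.1 hs.2]
    rw [add_sub_cancel_left, mul_div_cancel_left₀ _ hε.ne', exp_sub, exp_log hs.1, exp_log hα,
      mul_div_cancel₀ _ hα.ne']

lemma bijOn_mul_exp (hε : 0 < ε) (hα : 0 < α) :
    BijOn (fun t => α * exp ((t - u) / ε)) (Iic u) (Ioc 0 α) :=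
  (invOn_truncatedLog hε hα).bijOn (mapsTo_mul_exp hε hα) fun _ _ =>
    add_le_of_nonpos_right (mul_nonpos_of_nonneg_of_nonpos hε.le (min_le_left _ _))

lemma hasDerivAt_mul_exp (ε u α t : ℝ) :
    HasDerivAt (fun t => α * exp ((t - u) / ε)) (α * ε⁻¹ * exp (-u / ε) * exp (t / ε)) t := by
  refine ((((hasDerivAt_id' t).sub_const u).div_const ε).exp.const_mul α).congr_deriv ?_
  rw [sub_div, sub_eq_neg_add, exp_add, ← neg_div]
  ring

lemma abs_deriv_smul_comp_truncatedLog (hε : 0 < ε) (hα : 0 < α) (F : ℝ → ℝ) :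
    EqOn (fun t => |α * ε⁻¹ * exp (-u / ε) * exp (t / ε)| •
        F (truncatedLog ε u α (α * exp ((t - u) / ε))))
      (fun t => α * ε⁻¹ * exp (-u / ε) * (F t * exp (t / ε))) (Iic u) := fun t ht => by
  have hinv : truncatedLog ε u α (α * exp ((t - u) / ε)) = t := (invOn_truncatedLog hε hα).1 ht
  simp only [hinv]
  rw [abs_of_pos (by positivity), smul_eq_mul]
  ring

lemma integrableOn_comp_truncatedLog_iff (hε : 0 < ε) (hα : 0 < α) :
    IntegrableOn (fun t => F (truncatedLog ε u α t)) (Ioc 0 α) ↔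
      IntegrableOn (fun t => F t * exp (t / ε)) (Iic u) := by
  have hbij : BijOn (fun t => α * exp ((t - u) / ε)) (Iic u) (Ioc 0 α) := bijOn_mul_exp hε hα
  have hconst : α * ε⁻¹ * exp (-u / ε) ≠ 0 := by positivity
  rw [← hbij.image_eq, integrableOn_image_iff_integrableOn_abs_deriv_smul measurableSet_Iic
      (fun t _ => (hasDerivAt_mul_exp ε u α t).hasDerivWithinAt) hbij.injOn,
    integrableOn_congr_fun (abs_deriv_smul_comp_truncatedLog hε hα F) measurableSet_Iic]
  exact integrable_const_mul_iff hconst.isUnit _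

lemma integral_comp_truncatedLog (hε : 0 < ε) (hα : 0 < α) (F : ℝ → ℝ) :
    ∫ t in Ioc 0 α, F (truncatedLog ε u α t) = α * expAvg ε F u := by
  have hbij : BijOn (fun t => α * exp ((t - u) / ε)) (Iic u) (Ioc 0 α) := bijOn_mul_exp hε hα
  rw [← hbij.image_eq, integral_image_eq_integral_abs_deriv_smul measurableSet_Iic
      (fun t _ => (hasDerivAt_mul_exp ε u α t).hasDerivWithinAt) hbij.injOn,
    setIntegral_congr_fun measurableSet_Iic (abs_deriv_smul_comp_truncatedLog hε hα F),
    integral_const_mul, expAvg]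
  ring

lemma eqOn_comp_truncatedLog (hα : 0 < α) (F : ℝ → ℝ) :
    EqOn (fun t => F (truncatedLog ε u α t)) (fun _ => F u) (Ioc α 1) := fun _ ht =>
  congrArg F (truncatedLog_of_ge hα ht.1.le)

lemma ExpIntegrable.comp_truncatedLog (hF : ExpIntegrable ε F) (hε : 0 < ε) (hα : 0 < α)
    (hα1 : α ≤ 1) : IntegrableOn (fun t => F (truncatedLog ε u α t)) (Ioc 0 1) := by
  rw [← Ioc_union_Ioc_eq_Ioc hα.le hα1]
  refine ((integrableOn_comp_truncatedLog_iff hε hα).2 (hF u)).union ?_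
  exact (integrableOn_congr_fun (eqOn_comp_truncatedLog hα F) measurableSet_Ioc).2
    (integrableOn_const measure_Ioc_lt_top.ne)

lemma ExpIntegrable.intAvg_comp_truncatedLog (hF : ExpIntegrable ε F) (hε : 0 < ε) (hα : 0 < α)
    (hα1 : α ≤ 1) :
    intAvg (fun t => F (truncatedLog ε u α t)) 0 1 = α * expAvg ε F u + (1 - α) * F u := by
  have hint := hF.comp_truncatedLog (u := u) hε hα hα1
  rw [intAvg_zero_one, intervalIntegral.integral_of_le zero_le_one]
  rw [← Ioc_union_Ioc_eq_Ioc hα.le hα1] at hint ⊢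
  rw [setIntegral_union (Ioc_disjoint_Ioc_of_le le_rfl) measurableSet_Ioc hint.left_of_union
      hint.right_of_union, integral_comp_truncatedLog hε hα,
    setIntegral_congr_fun measurableSet_Ioc (eqOn_comp_truncatedLog hα F), setIntegral_const,
    volume_real_Ioc_of_le hα1, smul_eq_mul]

lemma ExpIntegrable.intAvg_comp_truncatedLog_eq_sub {F' : ℝ → ℝ} (hF : ExpIntegrable ε F)
    (hF' : ExpIntegrable ε F') (hderiv : ∀ t, HasDerivAt F (F' t) t) (hε : 0 < ε) (hα : 0 < α)
    (hα1 : α ≤ 1) :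
    intAvg (fun t => F (truncatedLog ε u α t)) 0 1 = F u - α * ε * expAvg ε F' u := by
  rw [hF.intAvg_comp_truncatedLog hε hα hα1, expAvg_of_hasDerivAt hderiv hF hF']
  field_simp
  ring

lemma expIntegrable_of_integrableOn_comp_truncatedLog (hε : 0 < ε)
    (hF : ∀ u, IntegrableOn (fun t => F (truncatedLog ε u 1 t)) (Ioo 0 1)) :
    ExpIntegrable ε F := fun u =>
  (integrableOn_comp_truncatedLog_iff hε one_pos).1 
    (integrableOn_Ioc_iff_integrableOn_Ioo (by finiteness) |>.2 (hF u))

lemma expIntegrable_id (hε : 0 < ε) : ExpIntegrable ε fun t => t :=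
  expIntegrable_of_integrableOn_comp_truncatedLog hε fun u => (memBMOe_truncatedLog hε.le u 1).1

lemma expIntegrable_sq (hε : 0 < ε) : ExpIntegrable ε fun t => t ^ 2 :=
  expIntegrable_of_integrableOn_comp_truncatedLog hε fun u => (memBMOe_truncatedLog hε.le u 1).2.1

lemma bellmanPoint_truncatedLog (hε : 0 < ε) (hα : 0 < α) (hα1 : α ≤ 1) (u : ℝ) :
    bellmanPoint (truncatedLog ε u α) 0 1 = (u - α * ε, u ^ 2 - 2 * (α * ε) * (u - ε)) := by
  have hid := expIntegrable_id hε
  have hid_avg : expAvg ε (fun t => t) u = u - ε := by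
    have hone := expAvg_of_hasDerivAt hasDerivAt_id' hid (expIntegrable_const hε 1) u
    rw [expAvg_const hε, eq_div_iff hε.ne'] at hone
    linarith
  have htwo : ExpIntegrable ε fun t => 2 * t := fun v => by
    simpa only [IntegrableOn, mul_assoc] using (hid v).const_mul 2
  have hsq_deriv : ∀ t : ℝ, HasDerivAt (fun t => t ^ 2) (2 * t) t := fun t =>
    (hasDerivAt_pow 2 t).congr_deriv (by norm_num)
  have hsq_avg : expAvg ε (fun t => 2 * t) u = 2 * (u - ε) := by
    rw [← hid_avg]
    simp only [expAvg, mul_assoc, integral_const_mul]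
    ring
  refine Prod.ext ?_ ?_
  · change intAvg (fun t => truncatedLog ε u α t) 0 1 = _
    rw [hid.intAvg_comp_truncatedLog_eq_sub (expIntegrable_const hε 1) hasDerivAt_id' hε hα hα1,
      expAvg_const hε, mul_one]
  · change intAvg (fun t => truncatedLog ε u α t ^ 2) 0 1 = _
    rw [(expIntegrable_sq hε).intAvg_comp_truncatedLog_eq_sub htwo hsq_deriv hε hα hα1,
      hsq_avg]
    ring

lemma exists_truncatedLog_bellmanPoint_eq {x : ℝ × ℝ} (hε : 0 < ε) (hx : x ∈ parabStrip ε)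
    (hne : x.1 ^ 2 ≠ x.2) :
    ∃ α, 0 < α ∧ α ≤ 1 ∧ α * ε = uRpt ε x - x.1 ∧
      bellmanPoint (truncatedLog ε (uRpt ε x) α) 0 1 = x := by
  have hx' : x.2 - x.1 ^ 2 ≤ ε ^ 2 := sub_le_iff_le_add'.2 hx.2
  have hsqrt : √(ε ^ 2 - (x.2 - x.1 ^ 2)) < ε :=
    (sqrt_lt' hε).2 (sub_lt_self _ (sub_pos.2 (hx.1.lt_of_ne hne)))
  have hsub : uRpt ε x - x.1 = ε - √(ε ^ 2 - (x.2 - x.1 ^ 2)) := by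
    rw [uRpt]
    ring
  have hαε : (uRpt ε x - x.1) / ε * ε = uRpt ε x - x.1 := div_mul_cancel₀ _ hε.ne'
  have hα : 0 < (uRpt ε x - x.1) / ε := div_pos (hsub ▸ sub_pos.2 hsqrt) hε
  have hα1 : (uRpt ε x - x.1) / ε ≤ 1 :=
    (div_le_one hε).2 (hsub ▸ sub_le_self _ (sqrt_nonneg _))
  refine ⟨_, hα, hα1, hαε, ?_⟩
  rw [bellmanPoint_truncatedLog hε hα hα1, hαε]
  refine Prod.ext (sub_sub_cancel _ _) ?_
  have hexcess := tangentExcess_uRpt hx'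
  rw [tangentExcess] at hexcess
  linear_combination -hexcess

lemma RightTangentAdmissible.exists_intAvg_eq_rightCandidate {f : ℝ → ℝ} {x : ℝ × ℝ}
    (hf : RightTangentAdmissible ε f) (hε : 0 < ε) (hx : x ∈ parabStrip ε) :
    ∃ φ, memBMOe ε 0 1 φ ∧ IntegrableOn (fun t => f (φ t)) (Ioo 0 1) ∧
      bellmanPoint φ 0 1 = x ∧ intAvg (fun t => f (φ t)) 0 1 = rightCandidate ε f x := by
  rcases eq_or_ne (x.1 ^ 2) x.2 with hparabola | hne
  · refine ⟨fun _ => x.1, memBMOe_const x.1, integrableOn_const measure_Ioo_lt_top.ne, ?_, ?_⟩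
    · exact Prod.ext (intAvg_const _ zero_ne_one)
        ((intAvg_const _ zero_ne_one).trans hparabola)
    · have hx_eq : x = (x.1, x.1 ^ 2) := Prod.ext rfl hparabola.symm
      rw [intAvg_const _ zero_ne_one, hx_eq, rightCandidate_of_mem_parabola hε.le]
  · obtain ⟨α, hα, hα1, hαε, hpoint⟩ := exists_truncatedLog_bellmanPoint_eq hε hx hne
    refine ⟨_, memBMOe_truncatedLog hε.le _ α,
      (hf.expIntegrable.comp_truncatedLog hε hα hα1).mono_set Ioo_subset_Ioc_self, hpoint, ?_⟩
    rw [hf.expIntegrable.intAvg_comp_truncatedLog_eq_sub hf.expIntegrable_deriv hf.hasDerivAt hε hα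
      hα1, hαε, rightCandidate]
    ring

end Optimizer

theorem RightTangentAdmissible.bellmanFn_eq_rightCandidate {ε : ℝ} {f : ℝ → ℝ} {x : ℝ × ℝ}
    (hf : RightTangentAdmissible ε f) (hε : 0 < ε) (hx : x ∈ parabStrip ε) :
    bellmanFn ε f x.1 x.2 = rightCandidate ε f x := by
  obtain ⟨φ, hφ, hint, rfl, hattained⟩ := hf.exists_intAvg_eq_rightCandidate hε hx
  refine IsGreatest.csSup_eq ⟨⟨φ, hφ, hint, rfl, rfl, hattained.symm⟩, ?_⟩
  rintro y ⟨ψ, hψ, hintψ, hfst, hsnd, rfl⟩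
  rw [← (Prod.ext hfst hsnd : bellmanPoint ψ 0 1 = bellmanPoint φ 0 1)]
  exact hf.intAvg_le_rightCandidate hε zero_lt_one hψ hintψ

section Reflection

variable {ε : ℝ} {f : ℝ → ℝ} {x : ℝ × ℝ}

lemma bellmanFn_comp_neg (ε : ℝ) (f : ℝ → ℝ) (x₁ x₂ : ℝ) :
    bellmanFn ε (fun t => f (-t)) (-x₁) x₂ = bellmanFn ε f x₁ x₂ := by
  unfold bellmanFn
  congr 1
  ext y
  constructor
  · rintro ⟨φ, hφ, hint, hfst, hsnd, hy⟩
    refine ⟨fun t => -φ t, hφ.neg, hint, ?_, by simpa only [neg_sq] using hsnd, hy⟩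
    rw [intAvg_neg, hfst, neg_neg]
  · rintro ⟨φ, hφ, hint, hfst, hsnd, hy⟩
    refine ⟨fun t => -φ t, hφ.neg, by simpa only [neg_neg] using hint, ?_,
      by simpa only [neg_sq] using hsnd, by simpa only [neg_neg] using hy⟩
    rw [intAvg_neg, hfst]

lemma neg_fst_mem_parabStrip (hx : x ∈ parabStrip ε) : (-x.1, x.2) ∈ parabStrip ε := by
  simpa only [parabStrip, mem_ofPred_eq, neg_sq] using hx

lemma uRpt_neg_fst (ε : ℝ) (x : ℝ × ℝ) : uRpt ε (-x.1, x.2) = -uLpt ε x := by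
  simp only [uRpt, uLpt, neg_sq]
  ring

/-- The mirror image of `RightTangentAdmissible`: `f''` is monotone and the exponential means are
taken towards `+∞`. -/
def LeftTangentAdmissible (ε : ℝ) (f : ℝ → ℝ) : Prop :=
  RightTangentAdmissible ε fun t => f (-t)

/-- The Bellman candidate ruled over the left tangents; its slope is `m_L` at the lower end of the
left tangent through `x`. -/
noncomputable def leftCandidate (ε : ℝ) (f : ℝ → ℝ) (x : ℝ × ℝ) : ℝ :=
  (ε⁻¹ * exp (uLpt ε x / ε) * ∫ t in Ici (uLpt ε x), deriv f t * exp (-t / ε)) *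
    (x.1 - uLpt ε x) + f (uLpt ε x)

lemma expAvg_deriv_comp_neg (ε : ℝ) (f : ℝ → ℝ) (u : ℝ) :
    expAvg ε (deriv fun t => f (-t)) (-u) =
      -(ε⁻¹ * exp (u / ε) * ∫ t in Ici u, deriv f t * exp (-t / ε)) := by
  have hreflect := integral_comp_neg_Iic (-u) fun t => deriv f t * exp (-t / ε)
  simp only [neg_neg] at hreflect
  simp only [expAvg, deriv_comp_neg, neg_mul, integral_neg, neg_neg, mul_neg]
  rw [hreflect, integral_Ici_eq_integral_Ioi]

lemma rightCandidate_comp_neg (ε : ℝ) (f : ℝ → ℝ) (x : ℝ × ℝ) :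
    rightCandidate ε (fun t => f (-t)) (-x.1, x.2) = leftCandidate ε f x := by
  rw [rightCandidate, uRpt_neg_fst, expAvg_deriv_comp_neg, neg_neg, leftCandidate]
  ring

theorem LeftTangentAdmissible.bellmanFn_eq_leftCandidate (hf : LeftTangentAdmissible ε f)
    (hε : 0 < ε) (hx : x ∈ parabStrip ε) : bellmanFn ε f x.1 x.2 = leftCandidate ε f x := by
  rw [← bellmanFn_comp_neg, ← rightCandidate_comp_neg]
  exact RightTangentAdmissible.bellmanFn_eq_rightCandidate hf hε (neg_fst_mem_parabStrip hx)

end Reflection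

section WeightedClass

variable {ε ε₀ : ℝ} {f f3 : ℝ → ℝ}

lemma div_add_abs_div_le {t u : ℝ} (hε : 0 < ε) (hεε₀ : ε ≤ ε₀) (htu : t ≤ u) :
    t / ε + |t| / ε₀ ≤ |u| / ε + |u| / ε₀ := by
  have hε₀ : 0 < ε₀ := hε.trans_le hεε₀
  rcases le_total t 0 with ht | ht
  · have hle : |t| / ε₀ ≤ |t| / ε := div_le_div_of_nonneg_left (abs_nonneg t) hε hεε₀
    have hnonneg : 0 ≤ |u| / ε + |u| / ε₀ := by positivity
    simp only [abs_of_nonpos ht, neg_div] at hle ⊢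
    linarith
  · have habs : |t| ≤ |u| := abs_le_abs_of_nonneg ht htu
    have hle : t ≤ |u| := htu.trans (le_abs_self u)
    gcongr

lemma expIntegrable_of_integrable {F : ℝ → ℝ} (hε : 0 < ε) (hεε₀ : ε ≤ ε₀)
    (hF : Integrable fun t => F t * exp (-|t| / ε₀)) : ExpIntegrable ε F := fun u => by
  have hcont : Continuous fun t : ℝ => exp (t / ε + |t| / ε₀) := by fun_prop
  have hbound : ∀ᵐ t ∂volume.restrict (Iic u),
      ‖exp (t / ε + |t| / ε₀)‖ ≤ exp (|u| / ε + |u| / ε₀) := by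
    filter_upwards [ae_restrict_mem measurableSet_Iic] with t ht
    rw [norm_of_nonneg (exp_pos _).le]
    exact exp_le_exp.2 (div_add_abs_div_le hε hεε₀ ht)
  refine (hF.integrableOn.mul_bdd hcont.aestronglyMeasurable hbound).congr (.of_forall fun t => ?_)
  simp only [mul_assoc, ← exp_add]
  congr 2
  ring

lemma memWcl.antitone_deriv_two (hf : memWcl ε₀ f f3) (hf3 : ∀ᵐ t, f3 t ≤ 0) :
    Antitone (deriv (deriv f)) := fun s t hst => by
  rw [← sub_nonpos, hf.2.1 s t hst, intervalIntegral.integral_of_le hst]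
  exact integral_nonpos_of_ae (ae_restrict_of_ae hf3)

lemma memWcl.rightTangentAdmissible (hf : memWcl ε₀ f f3) (hε : 0 < ε) (hεε₀ : ε ≤ ε₀)
    (hf3 : ∀ᵐ t, f3 t ≤ 0) : RightTangentAdmissible ε f where
  contDiff := hf.1
  expIntegrable := expIntegrable_of_integrable hε hεε₀ hf.2.2.1
  expIntegrable_deriv := expIntegrable_of_integrable hε hεε₀ hf.2.2.2.1
  expIntegrable_deriv_two := expIntegrable_of_integrable hε hεε₀ hf.2.2.2.2.1
  antitone_deriv_two := hf.antitone_deriv_two hf3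

lemma memWcl.comp_neg (hf : memWcl ε₀ f f3) :
    memWcl ε₀ (fun t => f (-t)) (fun t => -f3 (-t)) := by
  obtain ⟨hcontDiff, hprimitive, hint, hint₁, hint₂, hint₃⟩ := hf
  have hderiv : deriv (fun t => f (-t)) = fun t => -deriv f (-t) := funext (deriv_comp_neg f)
  have hderiv_two : deriv (deriv fun t => f (-t)) = fun t => deriv (deriv f) (-t) := by
    funext t
    rw [hderiv, deriv.fun_neg, deriv_comp_neg, neg_neg]
  have hreflect : ∀ F : ℝ → ℝ, Integrable (fun t => F t * exp (-|t| / ε₀)) →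
      Integrable fun t => F (-t) * exp (-|t| / ε₀) := fun F hF => by
    simpa only [abs_neg] using hF.comp_neg
  refine ⟨hcontDiff.comp contDiff_neg, fun s t hst => ?_, hreflect f hint, ?_, ?_, ?_⟩
  · simp only [hderiv_two]
    rw [intervalIntegral.integral_neg, intervalIntegral.integral_comp_neg,
      ← hprimitive _ _ (neg_le_neg hst), neg_sub]
  · simpa only [hderiv, neg_mul] using (hreflect _ hint₁).fun_neg
  · simpa only [hderiv_two] using hreflect _ hint₂
  · simpa only [neg_mul] using (hreflect _ hint₃).fun_neg

lemma memWcl.leftTangentAdmissible (hf : memWcl ε₀ f f3) (hε : 0 < ε) (hεε₀ : ε ≤ ε₀)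
    (hf3 : ∀ᵐ t, 0 ≤ f3 t) : LeftTangentAdmissible ε f := by
  refine hf.comp_neg.rightTangentAdmissible hε hεε₀ ?_
  filter_upwards [(Measure.measurePreserving_neg volume).quasiMeasurePreserving.ae hf3] with t ht
  exact neg_nonpos.2 ht

end WeightedClass

theorem stmt11_general {ε : ℝ} (hε : 0 < ε) (f : ℝ → ℝ) :
    (RightTangentAdmissible ε f →
      ∀ x ∈ parabStrip ε, bellmanFn ε f x.1 x.2 = rightCandidate ε f x) ∧
    (LeftTangentAdmissible ε f →
      ∀ x ∈ parabStrip ε, bellmanFn ε f x.1 x.2 = leftCandidate ε f x) :=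
  ⟨fun hf _ => hf.bellmanFn_eq_rightCandidate hε, fun hf _ => hf.bellmanFn_eq_leftCandidate hε⟩

theorem stmt11 (ε ε₀ : ℝ) (hε : 0 < ε) (hεε₀ : ε < ε₀) (f f3 : ℝ → ℝ)
    (hf : memWcl ε₀ f f3) :
    ((∀ᵐ t : ℝ, f3 t < 0) →
      ∀ x ∈ parabStrip ε,
        bellmanFn ε f x.1 x.2 =
          (ε⁻¹ * Real.exp (-(uRpt ε x) / ε) *
              ∫ t in Iic (uRpt ε x), deriv f t * Real.exp (t / ε)) *
            (x.1 - uRpt ε x) + f (uRpt ε x)) ∧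
    ((∀ᵐ t : ℝ, 0 < f3 t) →
      ∀ x ∈ parabStrip ε,
        bellmanFn ε f x.1 x.2 =
          (ε⁻¹ * Real.exp ((uLpt ε x) / ε) *
              ∫ t in Ici (uLpt ε x), deriv f t * Real.exp (-t / ε)) *
            (x.1 - uLpt ε x) + f (uLpt ε x)) :=
  (stmt11_general hε f).imp
    (fun h hf3 => h (hf.rightTangentAdmissible hε hεε₀.le (hf3.mono fun _ => le_of_lt)))
    (fun h hf3 => h (hf.leftTangentAdmissible hε hεε₀.le (hf3.mono fun _ => le_of_lt)))
end

section
/- Let ε > 0, let −∞ ≤ u₁ < v < u₂ ≤ +∞, and let f : ℝ → ℝ be twice continuously differentiable. Let m_R : (u₁, v] → ℝ and m_L : [v, u₂) → ℝ be twice differentiable with ε·m_R' + m_R = f' on (u₁,v], −ε·m_L' + m_L = f' on [v,u₂), m_R'' ≤ 0 on (u₁,v], and m_L'' ≥ 0 on [v,u₂). Set α₂ = (m_L(v) − m_R(v))/(4ε), α₁ = (m_R(v) + m_L(v))/2 − v·(m_L(v) − m_R(v))/(2ε), α₀ = v²·(m_L(v) − m_R(v))/(4ε) − v·(m_R(v)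 + m_L(v))/2 + f(v). Define B on Ω_{RL}(u₁,v,u₂) = {x ∈ Ω_ε : u₁ < u_R(x) and u_L(x) < u₂} by: B(x) = m_R(u_R(x))·(x₁ − u_R(x)) + f(u_R(x)) if u_R(x) ≤ v; B(x) = α₁x₁ + α₂x₂ + α₀ if u_L(x) ≤ v ≤ u_R(x); B(x) = m_L(u_L(x))·(x₁ − u_L(x)) + f(u_L(x)) if v ≤ u_L(x). Then B is well defined (the formulas agree on the overlaps) and continuous, and B is locally concave on Ω_{RL}(u₁,v,u₂) if and only if m_R(v) + m_L(v) = 2f'(v), which is equivalent to m_R''(v) + m_L''(v) = 0. -/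
open Set Real

/-- Local concavity on a subset of the plane. -/
def LocallyConcaveOn (Ω : Set (ℝ × ℝ)) (G : ℝ × ℝ → ℝ) : Prop :=
  ∀ x y : ℝ × ℝ, x ∈ Ω → y ∈ Ω → segment ℝ x y ⊆ Ω →
    ∀ α β : ℝ, 0 ≤ α → 0 ≤ β → α + β = 1 →
      α * G x + β * G y ≤ G (α • x + β • y)

/-- The domain `Ω_{RL}(u₁,v,u₂)`. -/
def OmegaRL (ε : ℝ) (u₁ u₂ : EReal) : Set (ℝ × ℝ) :=
  {x | x ∈ parabStrip ε ∧ u₁ < (uRpt ε x : EReal) ∧ (uLpt ε x : EReal) < u₂}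

/-- The linear function on the angle `Ω_ang(v)`. -/
noncomputable def Bang (ε : ℝ) (f mR mL : ℝ → ℝ) (v : ℝ) (x : ℝ × ℝ) : ℝ :=
  ((mR v + mL v) / 2 - v * (mL v - mR v) / (2 * ε)) * x.1 +
    ((mL v - mR v) / (4 * ε)) * x.2 +
    (v ^ 2 * (mL v - mR v) / (4 * ε) - v * (mR v + mL v) / 2 + f v)

/-- The Bellman candidate `B^{RL}` glued from `B^R`, the angle, and `B^L`. -/
noncomputable def BRL (ε : ℝ) (f mR mL : ℝ → ℝ) (v : ℝ) (x : ℝ × ℝ) : ℝ :=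
  if uRpt ε x ≤ v then mR (uRpt ε x) * (x.1 - uRpt ε x) + f (uRpt ε x)
  else if v ≤ uLpt ε x then mL (uLpt ε x) * (x.1 - uLpt ε x) + f (uLpt ε x)
  else Bang ε f mR mL v x

/-!
To each extremal line, with parameter `s`, belongs the affine function `T_s` that is tangent to `B`
along it. Here `∂T_s(y)/∂s = m''(s) ℓ_s(y) / 2`, where `ℓ_s` vanishes on the line, so the signs of
`m_R''` and `m_L''` make `T_s(y)` minimal at the line through `y`, among all lines that contain a
point visible from `y`. If `m_R'(v) = m_L'(v)`, then the linear function on the angle is the common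
value of both families at `s = v`, and the `T_s` are supporting functions of `B` from above.

Conversely, concavity along vertical segments through the two sides of the angle bounds the vertical
slope `(m_R'(v) + m_L'(v)) / 4` of the angle by both `m_R'(v) / 2` and `m_L'(v) / 2`, which forces
`m_R'(v) = m_L'(v)`.
-/

open Filter Topology

theorem LocallyConcaveOn.of_concave_support {Ω : Set (ℝ × ℝ)} {G : ℝ × ℝ → ℝ}
    (hsupp : ∀ z ∈ Ω, ∃ A : ℝ × ℝ → ℝ, ConcaveOn ℝ univ A ∧ A z = G z ∧
      ∀ y ∈ Ω, segment ℝ z y ⊆ Ω → G y ≤ A y) :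
    LocallyConcaveOn Ω G := by
  intro x y hx hy hseg α β hα hβ hαβ
  have hz : α • x + β • y ∈ segment ℝ x y := ⟨α, β, hα, hβ, hαβ, rfl⟩
  obtain ⟨A, hA, hAz, hGA⟩ := hsupp _ (hseg hz)
  have hGx : G x ≤ A x := hGA x hx
    (((convex_segment x y).segment_subset hz (left_mem_segment ℝ x y)).trans hseg)
  have hGy : G y ≤ A y := hGA y hy
    (((convex_segment x y).segment_subset hz (right_mem_segment ℝ x y)).trans hseg)
  calc α * G x + β * G y ≤ α * A x + β * A y := by gcongr
    _ ≤ A (α • x + β • y) := hA.2 (mem_univ x) (mem_univ y) hα hβ hαβ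
    _ = G (α • x + β • y) := hAz

theorem LocallyConcaveOn.concaveOn_vertical {Ω : Set (ℝ × ℝ)} {G : ℝ × ℝ → ℝ} {a : ℝ} {J : Set ℝ}
    (hG : LocallyConcaveOn Ω G) (hJ : Convex ℝ J) (hJΩ : ∀ t ∈ J, (a, t) ∈ Ω) :
    ConcaveOn ℝ J fun t => G (a, t) := by
  have combo : ∀ {s t α β : ℝ}, α + β = 1 →
      α • ((a, s) : ℝ × ℝ) + β • (a, t) = (a, α • s + β • t) := fun h =>
    Prod.ext (Convex.combo_self h a) rfl
  refine ⟨hJ, fun s hs t ht α β hα hβ hαβ => ?_⟩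
  have hseg : segment ℝ ((a, s) : ℝ × ℝ) (a, t) ⊆ Ω := by
    rintro _ ⟨α, β, hα, hβ, hαβ, rfl⟩
    rw [combo hαβ]
    exact hJΩ _ (hJ hs ht hα hβ hαβ)
  have h := hG _ _ (hJΩ s hs) (hJΩ t ht) hseg α β hα hβ hαβ
  rwa [combo hαβ] at h

theorem LocallyConcaveOn.vertical_right_deriv_le_left_deriv {Ω : Set (ℝ × ℝ)} {G : ℝ × ℝ → ℝ}
    {z : ℝ × ℝ} {l r : ℝ} (hG : LocallyConcaveOn Ω G) (hz : Ω ∈ 𝓝 z)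
    (hl : HasDerivWithinAt (fun t => G (z.1, t)) l (Iic z.2) z.2)
    (hr : HasDerivWithinAt (fun t => G (z.1, t)) r (Ici z.2) z.2) : r ≤ l := by
  have hnhds : {t | (z.1, t) ∈ Ω} ∈ 𝓝 z.2 :=
    (by fun_prop : Continuous fun t : ℝ => (z.1, t)).continuousAt hz
  obtain ⟨δ, hδ, hball⟩ := Metric.mem_nhds_iff.1 hnhds
  have hconc := hG.concaveOn_vertical (convex_ball z.2 δ) hball
  have h := hconc.neg.leftDeriv_le_rightDeriv_of_mem_interior
    (by rw [Metric.isOpen_ball.interior_eq]; exact Metric.mem_ball_self hδ)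
  rw [(hl.mono Iio_subset_Iic_self).neg.derivWithin (uniqueDiffWithinAt_Iio _),
    (hr.mono Ioi_subset_Ici_self).neg.derivWithin (uniqueDiffWithinAt_Ioi _)] at h
  exact neg_le_neg_iff.1 h

/-- The square root of the vertical distance from `x` to the upper boundary of `Ω_ε`. It is the
horizontal distance from `x` to the point where either tangent through `x` touches that boundary. -/
noncomputable def sqrtDepth (ε : ℝ) (x : ℝ × ℝ) : ℝ := √(ε ^ 2 - (x.2 - x.1 ^ 2))

/-- The affine function vanishing on the line through `(s, s ^ 2)` that touches the upper boundary
of `Ω_ε` at abscissa `s - e`: the right tangents are `e = ε`, the left tangents `e = -ε`. -/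
def tangentForm (e s : ℝ) (y : ℝ × ℝ) : ℝ := y.2 - s ^ 2 - 2 * (s - e) * (y.1 - s)

/-- The value at `x` of the function that equals `f s` at `(s, s ^ 2)` and grows with slope `m s`
in `x₁` along the tangent of parameter `s`. -/
def lineValue (f m : ℝ → ℝ) (s : ℝ) (x : ℝ × ℝ) : ℝ := m s * (x.1 - s) + f s

/-- The affine function extending `lineValue f m s` off the tangent of parameter `s`, with vertical
slope `m' s / 2`: the tangent plane of the Bellman candidate along that line. -/
noncomputable def tangentPlane (e : ℝ) (f m m' : ℝ → ℝ) (s : ℝ) (y : ℝ × ℝ) : ℝ :=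
  lineValue f m s y + m' s / 2 * tangentForm e s y

/-- On `I`, `m'` and `m''` are the first two derivatives of `m`, and `m` solves the differential
equation `e m' + m = f'` of the slopes on right (`e = ε`) or left (`e = -ε`) tangents. -/
structure IsTangentSlope (e : ℝ) (f m m' m'' : ℝ → ℝ) (I : Set ℝ) : Prop where
  hasDerivAt_boundary : ∀ s ∈ I, HasDerivAt f (e * m' s + m s) s
  hasDerivAt_slope : ∀ s ∈ I, HasDerivAt m (m' s) s
  hasDerivAt_deriv : ∀ s ∈ I, HasDerivAt m' (m'' s) s

/-- The interval `(u₁, v]` of parameters of right tangents, as a set of reals. -/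
def rightParams (u₁ : EReal) (v : ℝ) : Set ℝ := {s | u₁ < s ∧ s ≤ v}

/-- The interval `[v, u₂)` of parameters of left tangents, as a set of reals. -/
def leftParams (v : ℝ) (u₂ : EReal) : Set ℝ := {s | v ≤ s ∧ s < u₂}

instance ordConnected_rightParams (u₁ : EReal) (v : ℝ) : (rightParams u₁ v).OrdConnected :=
  ⟨fun _ ha _ hb _ hs => ⟨ha.1.trans_le (EReal.coe_le_coe hs.1), hs.2.trans hb.2⟩⟩

instance ordConnected_leftParams (v : ℝ) (u₂ : EReal) : (leftParams v u₂).OrdConnected :=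
  ⟨fun _ ha _ hb _ hs => ⟨ha.1.trans hs.1, (EReal.coe_le_coe hs.2).trans_lt hb.2⟩⟩

theorem uniqueDiffWithinAt_rightParams {u₁ : EReal} {v : ℝ} (hu₁ : u₁ < v) :
    UniqueDiffWithinAt ℝ (rightParams u₁ v) v := by
  refine (uniqueDiffWithinAt_Iic v).mono_nhds (nhdsWithin_le_of_mem ?_)
  filter_upwards [self_mem_nhdsWithin, nhdsWithin_le_nhds
    (continuous_coe_real_ereal.continuousAt.eventually (lt_mem_nhds hu₁))] with s hsv hsu
  exact ⟨hsu, hsv⟩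

theorem uniqueDiffWithinAt_leftParams {u₂ : EReal} {v : ℝ} (hu₂ : v < u₂) :
    UniqueDiffWithinAt ℝ (leftParams v u₂) v := by
  refine (uniqueDiffWithinAt_Ici v).mono_nhds (nhdsWithin_le_of_mem ?_)
  filter_upwards [self_mem_nhdsWithin, nhdsWithin_le_nhds
    (continuous_coe_real_ereal.continuousAt.eventually (gt_mem_nhds hu₂))] with s hsv hsu
  exact ⟨hsv, hsu⟩

/-! ### Geometry of the strip -/

section Strip

variable {ε v : ℝ} {x y z : ℝ × ℝ}

theorem uRpt_eq_sub_sqrtDepth (ε : ℝ) (x : ℝ × ℝ) : uRpt ε x = x.1 + ε - sqrtDepth ε x := rfl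

theorem uLpt_eq_add_sqrtDepth (ε : ℝ) (x : ℝ × ℝ) : uLpt ε x = x.1 - ε + sqrtDepth ε x := rfl

theorem sqrtDepth_nonneg (ε : ℝ) (x : ℝ × ℝ) : 0 ≤ sqrtDepth ε x := sqrt_nonneg _

theorem sq_sqrtDepth (hx : x ∈ parabStrip ε) :
    sqrtDepth ε x ^ 2 = ε ^ 2 - (x.2 - x.1 ^ 2) :=
  sq_sqrt (by linarith [hx.2])

theorem sqrtDepth_le (hε : 0 < ε) (hx : x ∈ parabStrip ε) : sqrtDepth ε x ≤ ε :=
  sqrt_le_iff.2 ⟨hε.le, by linarith [hx.1]⟩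

theorem uLpt_le_uRpt (hε : 0 < ε) (hx : x ∈ parabStrip ε) : uLpt ε x ≤ uRpt ε x := by
  rw [uLpt_eq_add_sqrtDepth, uRpt_eq_sub_sqrtDepth]
  linarith [sqrtDepth_le hε hx]

theorem continuous_uRpt (ε : ℝ) : Continuous (uRpt ε) := by unfold uRpt; fun_prop

theorem continuous_uLpt (ε : ℝ) : Continuous (uLpt ε) := by unfold uLpt; fun_prop

theorem antitone_sqrtDepth_vertical (ε a : ℝ) : Antitone fun t => sqrtDepth ε (a, t) :=
  fun _ _ h => sqrt_le_sqrt (by dsimp only; linarith)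

theorem tangentForm_eq_mul_uRpt (hx : x ∈ parabStrip ε) (s : ℝ) :
    tangentForm ε s x = (uRpt ε x - s) * (uRpt ε x + 2 * sqrtDepth ε x - s) := by
  rw [uRpt_eq_sub_sqrtDepth, tangentForm]
  linear_combination sq_sqrtDepth hx

theorem tangentForm_eq_mul_uLpt (hx : x ∈ parabStrip ε) (s : ℝ) :
    tangentForm (-ε) s x = (uLpt ε x - s) * (uLpt ε x - 2 * sqrtDepth ε x - s) := by
  rw [uLpt_eq_add_sqrtDepth, tangentForm]
  linear_combination sq_sqrtDepth hx

theorem sqrtDepth_sq_combo_le (hseg : segment ℝ z y ⊆ parabStrip ε) {α β : ℝ} (hα : 0 ≤ α)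
    (hβ : 0 ≤ β) (hαβ : α + β = 1) :
    α * β * (z.1 - y.1) ^ 2 ≤ α * sqrtDepth ε z ^ 2 + β * sqrtDepth ε y ^ 2 := by
  have hupper := (hseg ⟨α, β, hα, hβ, hαβ, rfl⟩).2
  rw [sq_sqrtDepth (hseg (left_mem_segment ℝ z y)), sq_sqrtDepth (hseg (right_mem_segment ℝ z y))]
  obtain rfl : β = 1 - α := by linarith
  simp only [Prod.fst_add, Prod.snd_add, Prod.smul_fst, Prod.smul_snd, smul_eq_mul] at hupper
  linarith

-- For `p, r > 0` with `p + r = |z.1 - y.1|`, the weights `r / (p + r)` and `p / (p + r)` turn the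
-- bound for the depth along the segment into an equality with `p`, `r` in place of the depths.
theorem abs_fst_sub_fst_le (hseg : segment ℝ z y ⊆ parabStrip ε) :
    |z.1 - y.1| ≤ sqrtDepth ε z + sqrtDepth ε y := by
  by_contra! hlt
  obtain ⟨p, hzp, r, hyr, hpr⟩ : ∃ p, sqrtDepth ε z < p ∧ ∃ r, sqrtDepth ε y < r ∧
      p + r = |z.1 - y.1| :=
    ⟨(|z.1 - y.1| + sqrtDepth ε z - sqrtDepth ε y) / 2, by linarith,
      (|z.1 - y.1| - sqrtDepth ε z + sqrtDepth ε y) / 2, by linarith, by ring⟩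
  have hp : 0 < p := (sqrtDepth_nonneg ε z).trans_lt hzp
  have hr : 0 < r := (sqrtDepth_nonneg ε y).trans_lt hyr
  have hcombo := sqrtDepth_sq_combo_le hseg (α := r / (p + r)) (β := p / (p + r))
    (by positivity) (by positivity) (by field_simp; ring)
  have hstrict : r / (p + r) * sqrtDepth ε z ^ 2 + p / (p + r) * sqrtDepth ε y ^ 2 <
      r / (p + r) * p ^ 2 + p / (p + r) * r ^ 2 := by
    have := sqrtDepth_nonneg ε z
    have := sqrtDepth_nonneg ε y
    gcongr
  have hbalance : r / (p + r) * (p / (p + r)) * (z.1 - y.1) ^ 2 =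
      r / (p + r) * p ^ 2 + p / (p + r) * r ^ 2 := by
    rw [← sq_abs, ← hpr]
    field_simp
  linarith

theorem uRpt_le_of_segment_subset (hseg : segment ℝ z y ⊆ parabStrip ε) :
    uRpt ε z ≤ uRpt ε y + 2 * sqrtDepth ε y := by
  rw [uRpt_eq_sub_sqrtDepth, uRpt_eq_sub_sqrtDepth]
  linarith [(abs_le.1 (abs_fst_sub_fst_le hseg)).2]

theorem le_uLpt_of_segment_subset (hseg : segment ℝ z y ⊆ parabStrip ε) :
    uLpt ε y - 2 * sqrtDepth ε y ≤ uLpt ε z := by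
  rw [uLpt_eq_add_sqrtDepth, uLpt_eq_add_sqrtDepth]
  linarith [(abs_le.1 (abs_fst_sub_fst_le hseg)).1]

theorem OmegaRL_mem_nhds {u₁ u₂ : EReal} (hlower : z.1 ^ 2 < z.2) (hupper : z.2 < z.1 ^ 2 + ε ^ 2)
    (hR : u₁ < (uRpt ε z : EReal)) (hL : (uLpt ε z : EReal) < u₂) : OmegaRL ε u₁ u₂ ∈ 𝓝 z := by
  have hcR := continuous_coe_real_ereal.comp (continuous_uRpt ε)
  have hcL := continuous_coe_real_ereal.comp (continuous_uLpt ε)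
  filter_upwards [
    (by fun_prop : Continuous fun x : ℝ × ℝ => x.1 ^ 2).continuousAt.eventually_lt
      continuousAt_snd hlower,
    continuousAt_snd.eventually_lt
      (by fun_prop : Continuous fun x : ℝ × ℝ => x.1 ^ 2 + ε ^ 2).continuousAt hupper,
    continuousAt_const.eventually_lt hcR.continuousAt hR,
    hcL.continuousAt.eventually_lt continuousAt_const hL] with x h₁ h₂ h₃ h₄
  exact ⟨⟨h₁.le, h₂.le⟩, h₃, h₄⟩

theorem sqrtDepth_three_quarters (hε : 0 < ε) (a : ℝ) :
    sqrtDepth ε (a, a ^ 2 + 3 / 4 * ε ^ 2) = ε / 2 := by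
  rw [sqrtDepth, show ε ^ 2 - (a ^ 2 + 3 / 4 * ε ^ 2 - a ^ 2) = (ε / 2) ^ 2 by ring,
    sqrt_sq (by positivity)]

theorem exists_OmegaRL_mem_nhds_uRpt_eq {u₁ u₂ : EReal} (hε : 0 < ε) (hu₁ : u₁ < v)
    (hu₂ : v < u₂) :
    ∃ z, OmegaRL ε u₁ u₂ ∈ 𝓝 z ∧ 0 < sqrtDepth ε z ∧ uRpt ε z = v ∧ uLpt ε z < v := by
  have hdepth := sqrtDepth_three_quarters hε (v - ε / 2)
  have huR : uRpt ε (v - ε / 2, (v - ε / 2) ^ 2 + 3 / 4 * ε ^ 2) = v := by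
    rw [uRpt_eq_sub_sqrtDepth, hdepth]; ring
  have huL : uLpt ε (v - ε / 2, (v - ε / 2) ^ 2 + 3 / 4 * ε ^ 2) < v := by
    rw [uLpt_eq_add_sqrtDepth, hdepth]; linarith
  have hε2 : 0 < ε ^ 2 := by positivity
  exact ⟨_, OmegaRL_mem_nhds (by dsimp only; linarith) (by dsimp only; linarith) (by rwa [huR])
    ((EReal.coe_lt_coe huL).trans hu₂), by rw [hdepth]; positivity, huR, huL⟩

theorem exists_OmegaRL_mem_nhds_uLpt_eq {u₁ u₂ : EReal} (hε : 0 < ε) (hu₁ : u₁ < v)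
    (hu₂ : v < u₂) :
    ∃ z, OmegaRL ε u₁ u₂ ∈ 𝓝 z ∧ 0 < sqrtDepth ε z ∧ uLpt ε z = v ∧ v < uRpt ε z := by
  have hdepth := sqrtDepth_three_quarters hε (v + ε / 2)
  have huL : uLpt ε (v + ε / 2, (v + ε / 2) ^ 2 + 3 / 4 * ε ^ 2) = v := by
    rw [uLpt_eq_add_sqrtDepth, hdepth]; ring
  have huR : v < uRpt ε (v + ε / 2, (v + ε / 2) ^ 2 + 3 / 4 * ε ^ 2) := by
    rw [uRpt_eq_sub_sqrtDepth, hdepth]; linarith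
  have hε2 : 0 < ε ^ 2 := by positivity
  exact ⟨_, OmegaRL_mem_nhds (by dsimp only; linarith) (by dsimp only; linarith)
    (hu₁.trans (EReal.coe_lt_coe huR)) (by rwa [huL]), by rw [hdepth]; positivity, huL, huR⟩

end Strip

/-! ### Tangent planes -/

section TangentPlane

variable {e ε : ℝ} {f m m' m'' : ℝ → ℝ} {I J : Set ℝ} {y : ℝ × ℝ}

theorem concaveOn_tangentPlane (e : ℝ) (f m m' : ℝ → ℝ) (s : ℝ) :
    ConcaveOn ℝ univ (tangentPlane e f m m' s) := by
  refine ⟨convex_univ, fun x _ y _ α β _ _ hαβ => le_of_eq ?_⟩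
  obtain rfl : β = 1 - α := by linarith
  simp only [tangentPlane, lineValue, tangentForm, Prod.fst_add, Prod.snd_add, Prod.smul_fst,
    Prod.smul_snd, smul_eq_mul]
  ring

theorem tangentPlane_uRpt (f m m' : ℝ → ℝ) (hy : y ∈ parabStrip ε) :
    tangentPlane ε f m m' (uRpt ε y) y = lineValue f m (uRpt ε y) y := by
  rw [tangentPlane, tangentForm_eq_mul_uRpt hy]; ring

theorem tangentPlane_uLpt (f m m' : ℝ → ℝ) (hy : y ∈ parabStrip ε) :
    tangentPlane (-ε) f m m' (uLpt ε y) y = lineValue f m (uLpt ε y) y := by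
  rw [tangentPlane, tangentForm_eq_mul_uLpt hy]; ring

namespace IsTangentSlope

theorem hasDerivAt_tangentPlane (h : IsTangentSlope e f m m' m'' I) {s : ℝ} (hs : s ∈ I)
    (y : ℝ × ℝ) :
    HasDerivAt (fun s => tangentPlane e f m m' s y) (m'' s / 2 * tangentForm e s y) s := by
  have hid := hasDerivAt_id s
  have hline := ((h.hasDerivAt_slope s hs).mul (hid.const_sub y.1)).add (h.hasDerivAt_boundary s hs)
  have hform := ((hid.pow 2).const_sub y.2).sub
    (((hid.sub_const e).const_mul 2).mul (hid.const_sub y.1))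
  refine (hline.add (((h.hasDerivAt_deriv s hs).div_const 2).mul hform)).congr_deriv ?_
  simp only [tangentForm, Pi.sub_apply, Pi.mul_apply, Pi.pow_apply, id_eq]
  ring

theorem antitoneOn_tangentPlane [J.OrdConnected] (h : IsTangentSlope e f m m' m'' I) (hJ : J ⊆ I)
    (hsign : ∀ s ∈ J, m'' s * tangentForm e s y ≤ 0) :
    AntitoneOn (fun s => tangentPlane e f m m' s y) J := by
  have hderiv := fun s hs => h.hasDerivAt_tangentPlane (hJ hs) y (s := s)
  refine antitoneOn_of_hasDerivWithinAt_nonpos (Set.OrdConnected.convex ‹_›)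
    (fun s hs => (hderiv s hs).continuousAt.continuousWithinAt)
    (fun s hs => (hderiv s (interior_subset hs)).hasDerivWithinAt) fun s hs => ?_
  linarith [hsign s (interior_subset hs)]

theorem monotoneOn_tangentPlane [J.OrdConnected] (h : IsTangentSlope e f m m' m'' I) (hJ : J ⊆ I)
    (hsign : ∀ s ∈ J, 0 ≤ m'' s * tangentForm e s y) :
    MonotoneOn (fun s => tangentPlane e f m m' s y) J := by
  have hderiv := fun s hs => h.hasDerivAt_tangentPlane (hJ hs) y (s := s)
  refine monotoneOn_of_hasDerivWithinAt_nonneg (Set.OrdConnected.convex ‹_›)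
    (fun s hs => (hderiv s hs).continuousAt.continuousWithinAt)
    (fun s hs => (hderiv s (interior_subset hs)).hasDerivWithinAt) fun s hs => ?_
  linarith [hsign s (interior_subset hs)]

theorem antitoneOn_tangentPlane_Iic_uRpt [I.OrdConnected] (h : IsTangentSlope ε f m m' m'' I)
    (hm : ∀ s ∈ I, m'' s ≤ 0) (hy : y ∈ parabStrip ε) :
    AntitoneOn (fun s => tangentPlane ε f m m' s y) (I ∩ Iic (uRpt ε y)) := by
  refine h.antitoneOn_tangentPlane inter_subset_left fun s ⟨hsI, hs⟩ => ?_
  rw [tangentForm_eq_mul_uRpt hy]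
  exact mul_nonpos_of_nonpos_of_nonneg (hm s hsI) (mul_nonneg (sub_nonneg.2 hs)
    (by linarith [mem_Iic.1 hs, sqrtDepth_nonneg ε y]))

theorem monotoneOn_tangentPlane_Ici_uLpt [I.OrdConnected] (h : IsTangentSlope (-ε) f m m' m'' I)
    (hm : ∀ s ∈ I, 0 ≤ m'' s) (hy : y ∈ parabStrip ε) :
    MonotoneOn (fun s => tangentPlane (-ε) f m m' s y) (I ∩ Ici (uLpt ε y)) := by
  refine h.monotoneOn_tangentPlane inter_subset_left fun s ⟨hsI, hs⟩ => ?_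
  rw [tangentForm_eq_mul_uLpt hy]
  exact mul_nonneg (hm s hsI) (mul_nonneg_of_nonpos_of_nonpos (sub_nonpos.2 hs)
    (by linarith [mem_Ici.1 hs, sqrtDepth_nonneg ε y]))

theorem monotoneOn_tangentPlane_Icc_uRpt [I.OrdConnected] (h : IsTangentSlope ε f m m' m'' I)
    (hm : ∀ s ∈ I, m'' s ≤ 0) (hy : y ∈ parabStrip ε) :
    MonotoneOn (fun s => tangentPlane ε f m m' s y)
      (I ∩ Icc (uRpt ε y) (uRpt ε y + 2 * sqrtDepth ε y)) := by
  refine h.monotoneOn_tangentPlane inter_subset_left fun s ⟨hsI, hs⟩ => ?_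
  rw [tangentForm_eq_mul_uRpt hy]
  exact mul_nonneg_of_nonpos_of_nonpos (hm s hsI)
    (mul_nonpos_of_nonpos_of_nonneg (sub_nonpos.2 hs.1) (sub_nonneg.2 hs.2))

theorem antitoneOn_tangentPlane_Icc_uLpt [I.OrdConnected] (h : IsTangentSlope (-ε) f m m' m'' I)
    (hm : ∀ s ∈ I, 0 ≤ m'' s) (hy : y ∈ parabStrip ε) :
    AntitoneOn (fun s => tangentPlane (-ε) f m m' s y)
      (I ∩ Icc (uLpt ε y - 2 * sqrtDepth ε y) (uLpt ε y)) := by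
  refine h.antitoneOn_tangentPlane inter_subset_left fun s ⟨hsI, hs⟩ => ?_
  rw [tangentForm_eq_mul_uLpt hy]
  exact mul_nonpos_of_nonneg_of_nonpos (hm s hsI)
    (mul_nonpos_of_nonneg_of_nonpos (sub_nonneg.2 hs.2) (sub_nonpos.2 hs.1))

theorem lineValue_uRpt_le_tangentPlane [I.OrdConnected] (h : IsTangentSlope ε f m m' m'' I)
    (hm : ∀ s ∈ I, m'' s ≤ 0) (hy : y ∈ parabStrip ε) (hyI : uRpt ε y ∈ I) {s : ℝ} (hs : s ∈ I)
    (hsy : s ≤ uRpt ε y + 2 * sqrtDepth ε y) :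
    lineValue f m (uRpt ε y) y ≤ tangentPlane ε f m m' s y := by
  rw [← tangentPlane_uRpt f m m' hy]
  rcases le_total s (uRpt ε y) with hle | hge
  · exact h.antitoneOn_tangentPlane_Iic_uRpt hm hy ⟨hs, hle⟩ ⟨hyI, self_mem_Iic⟩ hle
  · exact h.monotoneOn_tangentPlane_Icc_uRpt hm hy ⟨hyI, le_rfl, hge.trans hsy⟩ ⟨hs, hge, hsy⟩ hge

theorem lineValue_uLpt_le_tangentPlane [I.OrdConnected] (h : IsTangentSlope (-ε) f m m' m'' I)
    (hm : ∀ s ∈ I, 0 ≤ m'' s) (hy : y ∈ parabStrip ε) (hyI : uLpt ε y ∈ I) {s : ℝ} (hs : s ∈ I)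
    (hsy : uLpt ε y - 2 * sqrtDepth ε y ≤ s) :
    lineValue f m (uLpt ε y) y ≤ tangentPlane (-ε) f m m' s y := by
  rw [← tangentPlane_uLpt f m m' hy]
  rcases le_total s (uLpt ε y) with hle | hge
  · exact h.antitoneOn_tangentPlane_Icc_uLpt hm hy ⟨hs, hsy, hle⟩ ⟨hyI, hsy.trans hle, le_rfl⟩ hle
  · exact h.monotoneOn_tangentPlane_Ici_uLpt hm hy ⟨hyI, self_mem_Ici⟩ ⟨hs, hge⟩ hge

theorem continuousOn_lineValue (h : IsTangentSlope e f m m' m'' I) {u : ℝ × ℝ → ℝ}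
    (hu : Continuous u) : ContinuousOn (fun x => lineValue f m (u x) x) (u ⁻¹' I) := by
  have hm : ContinuousOn m I :=
    fun s hs => (h.hasDerivAt_slope s hs).continuousAt.continuousWithinAt
  have hf : ContinuousOn f I :=
    fun s hs => (h.hasDerivAt_boundary s hs).continuousAt.continuousWithinAt
  exact ((hm.comp hu.continuousOn (mapsTo_preimage u I)).mul (by fun_prop)).add
    (hf.comp hu.continuousOn (mapsTo_preimage u I))

theorem deriv_ode (h : IsTangentSlope e f m m' m'' I) {c d : ℝ} (hI : UniqueDiffWithinAt ℝ I c)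
    (hc : c ∈ I) (hf : HasDerivAt (deriv f) d c) : e * m'' c + m' c = d :=
  hI.eq_deriv _
    ((((h.hasDerivAt_deriv c hc).const_mul e).add (h.hasDerivAt_slope c hc)).hasDerivWithinAt.congr
      (fun s hs => (h.hasDerivAt_boundary s hs).deriv) (h.hasDerivAt_boundary c hc).deriv)
    hf.hasDerivWithinAt

theorem hasDerivAt_lineValue_vertical (h : IsTangentSlope e f m m' m'' I) {u : ℝ → ℝ} {u' a t : ℝ}
    (hu : HasDerivAt u u' t) (hI : u t ∈ I) (hu' : u' * (a + e - u t) = 1 / 2) :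
    HasDerivAt (fun t => lineValue f m (u t) (a, t)) (m' (u t) / 2) t := by
  have hm := (h.hasDerivAt_slope _ hI).comp t hu
  have hf := (h.hasDerivAt_boundary _ hI).comp t hu
  refine ((hm.mul (hu.const_sub a)).add hf).congr_deriv ?_
  simp only [Function.comp_apply]
  linear_combination m' (u t) * hu'

end IsTangentSlope

theorem hasDerivAt_sqrtDepth_vertical (hy : 0 < sqrtDepth ε y) :
    HasDerivAt (fun t => sqrtDepth ε (y.1, t)) (-(1 / (2 * sqrtDepth ε y))) y.2 := by
  have hne : ε ^ 2 - (y.2 - y.1 ^ 2) ≠ 0 := (sqrt_pos.1 hy).ne'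
  refine ((((hasDerivAt_id y.2).sub_const (y.1 ^ 2)).const_sub (ε ^ 2)).sqrt hne).congr_deriv ?_
  simp only [id, sqrtDepth, neg_div]

theorem IsTangentSlope.hasDerivAt_lineValue_uRpt (h : IsTangentSlope ε f m m' m'' I)
    (hyI : uRpt ε y ∈ I) (hy : 0 < sqrtDepth ε y) :
    HasDerivAt (fun t => lineValue f m (uRpt ε (y.1, t)) (y.1, t)) (m' (uRpt ε y) / 2) y.2 := by
  refine h.hasDerivAt_lineValue_vertical (u := fun t => uRpt ε (y.1, t))
    ((hasDerivAt_sqrtDepth_vertical hy).const_sub (y.1 + ε)) hyI ?_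
  rw [Prod.mk.eta, uRpt_eq_sub_sqrtDepth]
  field_simp
  ring

theorem IsTangentSlope.hasDerivAt_lineValue_uLpt (h : IsTangentSlope (-ε) f m m' m'' I)
    (hyI : uLpt ε y ∈ I) (hy : 0 < sqrtDepth ε y) :
    HasDerivAt (fun t => lineValue f m (uLpt ε (y.1, t)) (y.1, t)) (m' (uLpt ε y) / 2) y.2 := by
  refine h.hasDerivAt_lineValue_vertical (u := fun t => uLpt ε (y.1, t))
    ((hasDerivAt_sqrtDepth_vertical hy).const_add (y.1 - ε)) hyI ?_
  rw [Prod.mk.eta, uLpt_eq_add_sqrtDepth]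
  field_simp
  ring

end TangentPlane

/-! ### The glued candidate -/

section Candidate

variable {ε v : ℝ} {u₁ u₂ : EReal} {f mR mR' mR'' mL mL' mL'' : ℝ → ℝ} {x y z : ℝ × ℝ}

theorem lineValue_eq_Bang_of_uRpt_eq (hε : 0 < ε) (hx : x ∈ parabStrip ε) (h : uRpt ε x = v) :
    lineValue f mR (uRpt ε x) x = Bang ε f mR mL v x := by
  have htangent : tangentForm ε v x = 0 := by rw [tangentForm_eq_mul_uRpt hx, h]; ring
  have hx₂ : x.2 = v ^ 2 + 2 * (v - ε) * (x.1 - v) := by rw [tangentForm] at htangent; linarith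
  rw [h, lineValue, Bang, hx₂]
  field_simp
  ring

theorem lineValue_eq_Bang_of_uLpt_eq (hε : 0 < ε) (hx : x ∈ parabStrip ε) (h : uLpt ε x = v) :
    lineValue f mL (uLpt ε x) x = Bang ε f mR mL v x := by
  have htangent : tangentForm (-ε) v x = 0 := by rw [tangentForm_eq_mul_uLpt hx, h]; ring
  have hx₂ : x.2 = v ^ 2 + 2 * (v + ε) * (x.1 - v) := by rw [tangentForm] at htangent; linarith
  rw [h, lineValue, Bang, hx₂]
  field_simp
  ring

theorem BRL_of_uRpt_le (h : uRpt ε x ≤ v) : BRL ε f mR mL v x = lineValue f mR (uRpt ε x) x :=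
  if_pos h

theorem BRL_of_mem_angle (hε : 0 < ε) (hx : x ∈ parabStrip ε) (hL : uLpt ε x ≤ v)
    (hR : v ≤ uRpt ε x) : BRL ε f mR mL v x = Bang ε f mR mL v x := by
  unfold BRL
  split_ifs with hR' hL'
  · exact lineValue_eq_Bang_of_uRpt_eq hε hx (le_antisymm hR' hR)
  · exact lineValue_eq_Bang_of_uLpt_eq hε hx (le_antisymm hL hL')
  · rfl

theorem BRL_of_le_uLpt (hε : 0 < ε) (hx : x ∈ parabStrip ε) (h : v ≤ uLpt ε x) :
    BRL ε f mR mL v x = lineValue f mL (uLpt ε x) x := by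
  rcases h.eq_or_lt with heq | hlt
  · rw [lineValue_eq_Bang_of_uLpt_eq (mR := mR) hε hx heq.symm]
    exact BRL_of_mem_angle hε hx heq.ge (h.trans (uLpt_le_uRpt hε hx))
  · exact (if_neg (hlt.trans_le (uLpt_le_uRpt hε hx)).not_ge).trans (if_pos h)

theorem continuousOn_BRL (hε : 0 < ε) (hR : IsTangentSlope ε f mR mR' mR'' (rightParams u₁ v))
    (hL : IsTangentSlope (-ε) f mL mL' mL'' (leftParams v u₂)) :
    ContinuousOn (BRL ε f mR mL v) (OmegaRL ε u₁ u₂) := by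
  have huR := continuous_uRpt ε
  have huL := continuous_uLpt ε
  refine ContinuousOn.if ?_ ?_ (ContinuousOn.if ?_ ?_ ?_)
  · rintro x ⟨hx, hfront⟩
    have heq : uRpt ε x = v := frontier_le_subset_eq huR continuous_const hfront
    refine (lineValue_eq_Bang_of_uRpt_eq (mL := mL) hε hx.1 heq).trans ?_
    split_ifs with hv
    · exact (lineValue_eq_Bang_of_uLpt_eq hε hx.1
        (le_antisymm ((uLpt_le_uRpt hε hx.1).trans heq.le) hv)).symm
    · rfl
  · rw [(isClosed_le huR continuous_const).closure_eq]
    exact (hR.continuousOn_lineValue huR).mono fun x ⟨hx, hxv⟩ => ⟨hx.2.1, hxv⟩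
  · rintro x ⟨⟨hx, -⟩, hfront⟩
    exact lineValue_eq_Bang_of_uLpt_eq hε hx.1
      (frontier_le_subset_eq continuous_const huL hfront).symm
  · rw [(isClosed_le continuous_const huL).closure_eq]
    exact (hL.continuousOn_lineValue huL).mono fun x ⟨⟨hx, _⟩, hxv⟩ => ⟨hxv, hx.2.2⟩
  · unfold Bang
    fun_prop

theorem slope_sub_slope_eq (hR : HasDerivAt f (ε * mR' v + mR v) v)
    (hL : HasDerivAt f (-ε * mL' v + mL v) v) : mL v - mR v = ε * (mR' v + mL' v) := by
  linarith [hR.unique hL]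

theorem Bang_eq_tangentPlane_right (hε : ε ≠ 0) (hR : HasDerivAt f (ε * mR' v + mR v) v)
    (hL : HasDerivAt f (-ε * mL' v + mL v) v) (hmatch : mR' v = mL' v) :
    Bang ε f mR mL v x = tangentPlane ε f mR mR' v x := by
  have hmL : mL v = mR v + 2 * ε * mR' v := by
    have hjump := slope_sub_slope_eq hR hL
    rw [← hmatch] at hjump
    linarith
  rw [Bang, tangentPlane, lineValue, tangentForm, hmL]
  field_simp
  ring

theorem Bang_eq_tangentPlane_left (hε : ε ≠ 0) (hR : HasDerivAt f (ε * mR' v + mR v) v)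
    (hL : HasDerivAt f (-ε * mL' v + mL v) v) (hmatch : mR' v = mL' v) :
    Bang ε f mR mL v x = tangentPlane (-ε) f mL mL' v x := by
  have hmR : mR v = mL v - 2 * ε * mL' v := by
    have hjump := slope_sub_slope_eq hR hL
    rw [hmatch] at hjump
    linarith
  rw [Bang, tangentPlane, lineValue, tangentForm, hmR]
  field_simp
  ring

theorem BRL_le_tangentPlane_right (hε : 0 < ε) (hu₁ : u₁ < v) (hu₂ : v < u₂)
    (hR : IsTangentSlope ε f mR mR' mR'' (rightParams u₁ v))
    (hL : IsTangentSlope (-ε) f mL mL' mL'' (leftParams v u₂))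
    (hmR : ∀ s ∈ rightParams u₁ v, mR'' s ≤ 0) (hmL : ∀ s ∈ leftParams v u₂, 0 ≤ mL'' s)
    (hmatch : mR' v = mL' v) (hy : y ∈ OmegaRL ε u₁ u₂) {s : ℝ} (hs : s ∈ rightParams u₁ v)
    (hsL : uLpt ε y - 2 * sqrtDepth ε y ≤ s) (hsR : s ≤ uRpt ε y + 2 * sqrtDepth ε y) :
    BRL ε f mR mL v y ≤ tangentPlane ε f mR mR' s y := by
  have hvR : v ∈ rightParams u₁ v := ⟨hu₁, le_rfl⟩
  have hvL : v ∈ leftParams v u₂ := ⟨le_rfl, hu₂⟩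
  have hfR := hR.hasDerivAt_boundary v hvR
  have hfL := hL.hasDerivAt_boundary v hvL
  rcases le_total (uRpt ε y) v with hyR | hyR
  · rw [BRL_of_uRpt_le hyR]
    exact hR.lineValue_uRpt_le_tangentPlane hmR hy.1 ⟨hy.2.1, hyR⟩ hs hsR
  have hBang_le : Bang ε f mR mL v y ≤ tangentPlane ε f mR mR' s y := by
    rw [Bang_eq_tangentPlane_right hε.ne' hfR hfL hmatch]
    exact hR.antitoneOn_tangentPlane_Iic_uRpt hmR hy.1 ⟨hs, hs.2.trans hyR⟩ ⟨hvR, hyR⟩ hs.2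
  refine le_trans ?_ hBang_le
  rcases le_total (uLpt ε y) v with hyL | hyL
  · exact (BRL_of_mem_angle hε hy.1 hyL hyR).le
  · rw [BRL_of_le_uLpt hε hy.1 hyL, Bang_eq_tangentPlane_left hε.ne' hfR hfL hmatch]
    exact hL.lineValue_uLpt_le_tangentPlane hmL hy.1 ⟨hyL, hy.2.2⟩ hvL (hsL.trans hs.2)

theorem BRL_le_tangentPlane_left (hε : 0 < ε) (hu₁ : u₁ < v) (hu₂ : v < u₂)
    (hR : IsTangentSlope ε f mR mR' mR'' (rightParams u₁ v))
    (hL : IsTangentSlope (-ε) f mL mL' mL'' (leftParams v u₂))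
    (hmR : ∀ s ∈ rightParams u₁ v, mR'' s ≤ 0) (hmL : ∀ s ∈ leftParams v u₂, 0 ≤ mL'' s)
    (hmatch : mR' v = mL' v) (hy : y ∈ OmegaRL ε u₁ u₂) {s : ℝ} (hs : s ∈ leftParams v u₂)
    (hsL : uLpt ε y - 2 * sqrtDepth ε y ≤ s) (hsR : s ≤ uRpt ε y + 2 * sqrtDepth ε y) :
    BRL ε f mR mL v y ≤ tangentPlane (-ε) f mL mL' s y := by
  have hvR : v ∈ rightParams u₁ v := ⟨hu₁, le_rfl⟩
  have hvL : v ∈ leftParams v u₂ := ⟨le_rfl, hu₂⟩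
  have hfR := hR.hasDerivAt_boundary v hvR
  have hfL := hL.hasDerivAt_boundary v hvL
  rcases le_total v (uLpt ε y) with hyL | hyL
  · rw [BRL_of_le_uLpt hε hy.1 hyL]
    exact hL.lineValue_uLpt_le_tangentPlane hmL hy.1 ⟨hyL, hy.2.2⟩ hs hsL
  have hBang_le : Bang ε f mR mL v y ≤ tangentPlane (-ε) f mL mL' s y := by
    rw [Bang_eq_tangentPlane_left hε.ne' hfR hfL hmatch]
    exact hL.monotoneOn_tangentPlane_Ici_uLpt hmL hy.1 ⟨hvL, hyL⟩ ⟨hs, hyL.trans hs.1⟩ hs.1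
  refine le_trans ?_ hBang_le
  rcases le_total (uRpt ε y) v with hyR | hyR
  · rw [BRL_of_uRpt_le hyR, Bang_eq_tangentPlane_right hε.ne' hfR hfL hmatch]
    exact hR.lineValue_uRpt_le_tangentPlane hmR hy.1 ⟨hy.2.1, hyR⟩ hvR (hs.1.trans hsR)
  · exact (BRL_of_mem_angle hε hy.1 hyL hyR).le

theorem locallyConcaveOn_BRL (hε : 0 < ε) (hu₁ : u₁ < v) (hu₂ : v < u₂)
    (hR : IsTangentSlope ε f mR mR' mR'' (rightParams u₁ v))
    (hL : IsTangentSlope (-ε) f mL mL' mL'' (leftParams v u₂))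
    (hmR : ∀ s ∈ rightParams u₁ v, mR'' s ≤ 0) (hmL : ∀ s ∈ leftParams v u₂, 0 ≤ mL'' s)
    (hmatch : mR' v = mL' v) : LocallyConcaveOn (OmegaRL ε u₁ u₂) (BRL ε f mR mL v) := by
  have hleR := fun y hy s hs =>
    BRL_le_tangentPlane_right hε hu₁ hu₂ hR hL hmR hmL hmatch hy hs (y := y) (s := s)
  have hleL := fun y hy s hs =>
    BRL_le_tangentPlane_left hε hu₁ hu₂ hR hL hmR hmL hmatch hy hs (y := y) (s := s)
  have hvisible : ∀ {z y s}, segment ℝ z y ⊆ OmegaRL ε u₁ u₂ → uLpt ε z ≤ s → s ≤ uRpt ε z →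
      uLpt ε y - 2 * sqrtDepth ε y ≤ s ∧ s ≤ uRpt ε y + 2 * sqrtDepth ε y :=
    fun hseg hsL hsR => ⟨(le_uLpt_of_segment_subset fun w hw => (hseg hw).1).trans hsL,
      hsR.trans (uRpt_le_of_segment_subset fun w hw => (hseg hw).1)⟩
  refine .of_concave_support fun z hz => ?_
  have hzLR := uLpt_le_uRpt hε hz.1
  rcases le_total (uRpt ε z) v with hzR | hzR
  · refine ⟨_, concaveOn_tangentPlane ε f mR mR' (uRpt ε z), ?_, fun y hy hseg => ?_⟩
    · rw [tangentPlane_uRpt _ _ _ hz.1, BRL_of_uRpt_le hzR]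
    · obtain ⟨hsL, hsR⟩ := hvisible hseg hzLR le_rfl
      exact hleR y hy _ ⟨hz.2.1, hzR⟩ hsL hsR
  rcases le_total v (uLpt ε z) with hzL | hzL
  · refine ⟨_, concaveOn_tangentPlane (-ε) f mL mL' (uLpt ε z), ?_, fun y hy hseg => ?_⟩
    · rw [tangentPlane_uLpt _ _ _ hz.1, BRL_of_le_uLpt hε hz.1 hzL]
    · obtain ⟨hsL, hsR⟩ := hvisible hseg le_rfl hzLR
      exact hleL y hy _ ⟨hzL, hz.2.2⟩ hsL hsR
  · refine ⟨_, concaveOn_tangentPlane ε f mR mR' v, ?_, fun y hy hseg => ?_⟩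
    · rw [BRL_of_mem_angle hε hz.1 hzL hzR]
      exact (Bang_eq_tangentPlane_right hε.ne' (hR.hasDerivAt_boundary v ⟨hu₁, le_rfl⟩)
        (hL.hasDerivAt_boundary v ⟨le_rfl, hu₂⟩) hmatch).symm
    · obtain ⟨hsL, hsR⟩ := hvisible hseg hzL hzR
      exact hleR y hy _ ⟨hu₁, le_rfl⟩ hsL hsR

theorem hasDerivAt_Bang_vertical (ε : ℝ) (f mR mL : ℝ → ℝ) (v a t : ℝ) :
    HasDerivAt (fun t => Bang ε f mR mL v (a, t)) ((mL v - mR v) / (4 * ε)) t := by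
  simpa only [Bang, id_eq, mul_one] using
    (((hasDerivAt_id t).const_mul ((mL v - mR v) / (4 * ε))).const_add _).add_const _

theorem angle_slope_le_right (hε : 0 < ε) (hR : IsTangentSlope ε f mR mR' mR'' (rightParams u₁ v))
    (hB : LocallyConcaveOn (OmegaRL ε u₁ u₂) (BRL ε f mR mL v)) (hz : OmegaRL ε u₁ u₂ ∈ 𝓝 z)
    (hdepth : 0 < sqrtDepth ε z) (hzR : uRpt ε z = v) (hzL : uLpt ε z < v) :
    (mL v - mR v) / (4 * ε) ≤ mR' v / 2 := by
  have hcont : ContinuousAt (fun t : ℝ => (z.1, t)) z.2 := by fun_prop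
  have hanti := antitone_sqrtDepth_vertical ε z.1
  have hleft := hR.hasDerivAt_lineValue_uRpt ⟨(mem_of_mem_nhds hz).2.1, hzR.le⟩ hdepth
  rw [hzR] at hleft
  refine hB.vertical_right_deriv_le_left_deriv hz
    (hleft.hasDerivWithinAt.congr_of_mem (fun t ht => BRL_of_uRpt_le ?_) self_mem_Iic)
    ((hasDerivAt_Bang_vertical ε f mR mL v z.1 z.2).hasDerivWithinAt.congr_of_eventuallyEq_of_mem
      ?_ self_mem_Ici)
  · rw [← hzR]
    exact sub_le_sub_left (hanti ht) _
  · filter_upwards [self_mem_nhdsWithin, nhdsWithin_le_nhds (hcont hz)] with t ht hmem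
    refine BRL_of_mem_angle hε hmem.1 (le_trans ?_ hzL.le) (hzR.ge.trans ?_)
    · exact add_le_add_right (hanti ht) _
    · exact sub_le_sub_left (hanti ht) _

theorem angle_slope_le_left (hε : 0 < ε) (hL : IsTangentSlope (-ε) f mL mL' mL'' (leftParams v u₂))
    (hB : LocallyConcaveOn (OmegaRL ε u₁ u₂) (BRL ε f mR mL v)) (hz : OmegaRL ε u₁ u₂ ∈ 𝓝 z)
    (hdepth : 0 < sqrtDepth ε z) (hzL : uLpt ε z = v) (hzR : v < uRpt ε z) :
    (mL v - mR v) / (4 * ε) ≤ mL' v / 2 := by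
  have hcont : ContinuousAt (fun t : ℝ => (z.1, t)) z.2 := by fun_prop
  have hanti := antitone_sqrtDepth_vertical ε z.1
  have hleft := hL.hasDerivAt_lineValue_uLpt ⟨hzL.ge, (mem_of_mem_nhds hz).2.2⟩ hdepth
  rw [hzL] at hleft
  refine hB.vertical_right_deriv_le_left_deriv hz
    (hleft.hasDerivWithinAt.congr_of_eventuallyEq_of_mem ?_ self_mem_Iic)
    ((hasDerivAt_Bang_vertical ε f mR mL v z.1 z.2).hasDerivWithinAt.congr_of_eventuallyEq_of_mem
      ?_ self_mem_Ici)
  · filter_upwards [self_mem_nhdsWithin, nhdsWithin_le_nhds (hcont hz)] with t ht hmem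
    exact BRL_of_le_uLpt hε hmem.1 (hzL.ge.trans (add_le_add_right (hanti ht) _))
  · filter_upwards [self_mem_nhdsWithin, nhdsWithin_le_nhds (hcont hz)] with t ht hmem
    refine BRL_of_mem_angle hε hmem.1 (le_trans ?_ hzL.le) (hzR.le.trans ?_)
    · exact add_le_add_right (hanti ht) _
    · exact sub_le_sub_left (hanti ht) _

theorem locallyConcaveOn_BRL_iff (hε : 0 < ε) (hu₁ : u₁ < v) (hu₂ : v < u₂)
    (hR : IsTangentSlope ε f mR mR' mR'' (rightParams u₁ v))
    (hL : IsTangentSlope (-ε) f mL mL' mL'' (leftParams v u₂))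
    (hmR : ∀ s ∈ rightParams u₁ v, mR'' s ≤ 0) (hmL : ∀ s ∈ leftParams v u₂, 0 ≤ mL'' s) :
    LocallyConcaveOn (OmegaRL ε u₁ u₂) (BRL ε f mR mL v) ↔ mR' v = mL' v := by
  refine ⟨fun hB => ?_, locallyConcaveOn_BRL hε hu₁ hu₂ hR hL hmR hmL⟩
  obtain ⟨zR, hzR, hdepthR, hzRv, hzRL⟩ := exists_OmegaRL_mem_nhds_uRpt_eq hε hu₁ hu₂
  obtain ⟨zL, hzL, hdepthL, hzLv, hzLR⟩ := exists_OmegaRL_mem_nhds_uLpt_eq hε hu₁ hu₂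
  have hleR := angle_slope_le_right hε hR hB hzR hdepthR hzRv hzRL
  have hleL := angle_slope_le_left hε hL hB hzL hdepthL hzLv hzLR
  have hangle : (mL v - mR v) / (4 * ε) = (mR' v + mL' v) / 4 := by
    rw [slope_sub_slope_eq (hR.hasDerivAt_boundary v ⟨hu₁, le_rfl⟩)
      (hL.hasDerivAt_boundary v ⟨le_rfl, hu₂⟩)]
    field_simp
  linarith

theorem slope_add_slope_eq_iff {d : ℝ} (hε : ε ≠ 0) (hR : ε * mR' v + mR v = d)
    (hL : -ε * mL' v + mL v = d) : mR v + mL v = 2 * d ↔ mR' v = mL' v := by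
  have hsum : mR v + mL v - 2 * d = ε * (mL' v - mR' v) := by linarith
  rw [← sub_eq_zero, hsum, mul_eq_zero_iff_left hε, sub_eq_zero, eq_comm]

theorem deriv_slope_eq_iff {d : ℝ} (hε : ε ≠ 0) (hR : ε * mR'' v + mR' v = d)
    (hL : -ε * mL'' v + mL' v = d) : mR' v = mL' v ↔ mR'' v + mL'' v = 0 := by
  have hdiff : mL' v - mR' v = ε * (mR'' v + mL'' v) := by linarith
  rw [eq_comm, ← sub_eq_zero, hdiff, mul_eq_zero_iff_left hε]

end Candidate

theorem stmt12 (ε : ℝ) (hε : 0 < ε) (u₁ u₂ : EReal) (v : ℝ)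
    (hu₁ : u₁ < (v : EReal)) (hu₂ : (v : EReal) < u₂)
    (f : ℝ → ℝ) (hf : ContDiff ℝ 2 f)
    (mR mR' mR'' mL mL' mL'' : ℝ → ℝ)
    (hmR : ∀ u : ℝ, u₁ < (u : EReal) → u ≤ v →
      HasDerivAt mR (mR' u) u ∧ HasDerivAt mR' (mR'' u) u ∧
      ε * mR' u + mR u = deriv f u ∧ mR'' u ≤ 0)
    (hmL : ∀ u : ℝ, v ≤ u → (u : EReal) < u₂ →
      HasDerivAt mL (mL' u) u ∧ HasDerivAt mL' (mL'' u) u ∧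
      -ε * mL' u + mL u = deriv f u ∧ 0 ≤ mL'' u) :
    (∀ x ∈ OmegaRL ε u₁ u₂,
      (uRpt ε x = v →
        mR (uRpt ε x) * (x.1 - uRpt ε x) + f (uRpt ε x) = Bang ε f mR mL v x) ∧
      (uLpt ε x = v →
        mL (uLpt ε x) * (x.1 - uLpt ε x) + f (uLpt ε x) = Bang ε f mR mL v x)) ∧
    ContinuousOn (BRL ε f mR mL v) (OmegaRL ε u₁ u₂) ∧
    (LocallyConcaveOn (OmegaRL ε u₁ u₂) (BRL ε f mR mL v) ↔
      mR v + mL v = 2 * deriv f v) ∧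
    (mR v + mL v = 2 * deriv f v ↔ mR'' v + mL'' v = 0) := by
  have hf' (u : ℝ) : HasDerivAt f (deriv f u) u := (hf.differentiable two_ne_zero u).hasDerivAt
  have hf'' : HasDerivAt (deriv f) (deriv (deriv f) v) v :=
    (hf.differentiable_deriv_two v).hasDerivAt
  have hR : IsTangentSlope ε f mR mR' mR'' (rightParams u₁ v) :=
    ⟨fun s hs => (hmR s hs.1 hs.2).2.2.1 ▸ hf' s, fun s hs => (hmR s hs.1 hs.2).1,
      fun s hs => (hmR s hs.1 hs.2).2.1⟩
  have hL : IsTangentSlope (-ε) f mL mL' mL'' (leftParams v u₂) :=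
    ⟨fun s hs => (hmL s hs.1 hs.2).2.2.1 ▸ hf' s, fun s hs => (hmL s hs.1 hs.2).1,
      fun s hs => (hmL s hs.1 hs.2).2.1⟩
  have hodeR' := hR.deriv_ode (uniqueDiffWithinAt_rightParams hu₁) ⟨hu₁, le_rfl⟩ hf''
  have hodeL' := hL.deriv_ode (uniqueDiffWithinAt_leftParams hu₂) ⟨le_rfl, hu₂⟩ hf''
  have hmatch : mR v + mL v = 2 * deriv f v ↔ mR' v = mL' v :=
    slope_add_slope_eq_iff hε.ne' (hmR v hu₁ le_rfl).2.2.1 (hmL v le_rfl hu₂).2.2.1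
  refine ⟨fun x hx => ⟨lineValue_eq_Bang_of_uRpt_eq hε hx.1, lineValue_eq_Bang_of_uLpt_eq hε hx.1⟩,
    continuousOn_BRL hε hR hL, ?_, hmatch.trans (deriv_slope_eq_iff hε.ne' hodeR' hodeL')⟩
  rw [hmatch]
  exact locallyConcaveOn_BRL_iff hε hu₁ hu₂ hR hL
    (fun s hs => (hmR s hs.1 hs.2).2.2.2) fun s hs => (hmL s hs.1 hs.2).2.2.2
end
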